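/- arXiv:2505.21989 — 2 statements merged into one kernel-verified Lean document; each statement's English description precedes it below -/
import Mathlib

section
/- For all integers n ≥ 0, the number of (2,3)-regular overpartitions satisfies R̄_{2,3}(27n) ≡ R̄_{2,3}(3n) (mod 3). -/
/-- Number of partitions of `a` with no part divisible by `ℓ` or `μ`
(the non-overlined parts of an `(ℓ,μ)`-regular overpartition). -/
def regularCount (ℓ μ a : ℕ) : ℕ :=
  Fintype.card {p : a.Partition // ∀ i ∈ p.parts, ¬ ℓ ∣ i ∧ ¬ μ ∣ i}

/-- Number of partitions of `a` into distinct parts with no part divisible by `ℓ` or `μ`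
(the overlined parts of an `(ℓ,μ)`-regular overpartition). -/
def regularDistinctCount (ℓ μ a : ℕ) : ℕ :=
  Fintype.card {p : a.Partition // p.parts.Nodup ∧ ∀ i ∈ p.parts, ¬ ℓ ∣ i ∧ ¬ μ ∣ i}

/-- `Rbar ℓ μ n` is the number of `(ℓ,μ)`-regular overpartitions of `n`: pairs `(λ, δ)`
where `λ` is a partition, `δ` is a partition into distinct parts, `|λ| + |δ| = n`,
and no part of `λ` or `δ` is divisible by `ℓ` or by `μ`. -/
def Rbar (ℓ μ n : ℕ) : ℕ :=
  ∑ ab ∈ Finset.HasAntidiagonal.antidiagonal n, regularCount ℓ μ ab.1 * regularDistinctCount ℓ μ ab.2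

/-!
Write `φ = ∑ q^(x²)`, `φ̄ = φ(-q)`, `G = ∑ R̄(n) qⁿ` and `U` for `∑ a(n) qⁿ ↦ ∑ a(3n) qⁿ`. Modulo
`3`, `f(q³) = f³`, so `U (f³ g) = f · U g`. The product for `G`, together with Gauss's product for
`φ̄ / φ`, gives `G ≡ φ̄ / φ`. Hence `φ · U G ≡ U (φ² φ̄) = U (φ φ₂²)` with `φ₂ = φ(-q²)` and
`φ φ̄ = φ₂²`. The factorisation `3 = (1 + √-2)(1 - √-2)` in `ℤ[√-2]` gives a Hecke relation for
the theta series `φ φ₂` of `x² + 2y²`, from which `U (φ φ₂²) ≡ φ̄ φ₂⁴` and so `U G ≡ φ̄³ φ`. Since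
`U φ = φ(q³) ≡ φ³` and likewise for `φ̄`, two further applications of `U` give
`φ̄³ φ ↦ φ̄ φ³ ↦ φ̄³ φ`.
-/

open Finset Filter Topology PowerSeries
open scoped PowerSeries.WithPiTopology

section PowerSeries

variable {R : Type*}

theorem continuous_of_continuous_coeff [Semiring R] [TopologicalSpace R] {α : Type*}
    [TopologicalSpace α] {F : α → R⟦X⟧} (hF : ∀ d, Continuous fun a ↦ coeff d (F a)) :
    Continuous F :=
  continuous_iff_continuousAt.2 fun a ↦
    (WithPiTopology.tendsto_iff_coeff_tendsto R F _ _).2 fun d ↦ (hF d).tendsto a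

theorem continuous_expand [CommRing R] [TopologicalSpace R] {m : ℕ} (hm : m ≠ 0) :
    Continuous (expand m hm : R⟦X⟧ →ₐ[R] R⟦X⟧) := by
  refine continuous_of_continuous_coeff fun d ↦ ?_
  simp only [coeff_expand]
  split_ifs
  exacts [WithPiTopology.continuous_coeff R _, continuous_const]

theorem expand_eq_pow {p : ℕ} [Fact p.Prime] (hp : p ≠ 0) (f : (ZMod p)⟦X⟧) :
    expand p hp f = f ^ p := by
  have h := MvPowerSeries.map_frobenius_expand p hp (f := f)
  rwa [ZMod.frobenius_zmod, MvPowerSeries.map_id] at h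

theorem hasSum_indicator_range_iff {ι κ α : Type*} [AddCommMonoid α] [TopologicalSpace α]
    {f : ι → α} {a : α} {e : κ → ι} (he : e.Injective) :
    HasSum ((Set.range e).indicator f) a ↔ HasSum (f ∘ e) a :=
  hasSum_subtype_iff_indicator.symm.trans he.hasSum_range_iff

theorem summable_monomial [Semiring R] [TopologicalSpace R] {ι : Type*} {e : ι → ℕ}
    (he : Tendsto e cofinite atTop) (c : ι → R) : Summable fun i ↦ monomial (e i) (c i) := by
  refine (WithPiTopology.summable_iff_summable_coeff R).2 fun d ↦
    summable_of_hasFiniteSupport <|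
      (eventually_cofinite.1 (he.eventually_gt_atTop d)).subset fun i hi ↦ ?_
  have hdi : d = e i := by
    by_contra h
    simp [coeff_monomial, h] at hi
  simp [hdi]

theorem tendsto_add_cofinite_atTop {ι κ : Type*} {e : ι → ℕ} {e' : κ → ℕ}
    (he : Tendsto e cofinite atTop) (he' : Tendsto e' cofinite atTop) :
    Tendsto (fun p : ι × κ ↦ e p.1 + e' p.2) cofinite atTop := by
  refine tendsto_atTop.2 fun b ↦ eventually_cofinite.2 <|
    ((eventually_cofinite.1 (he.eventually_ge_atTop b)).prod
      (eventually_cofinite.1 (he'.eventually_ge_atTop b))).subset fun p hp ↦ ?_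
  simp only [Set.mem_prod, Set.mem_ofPred_eq] at hp ⊢
  lia

end PowerSeries

section AtkinU

variable {R : Type*} [CommRing R]

/-- Atkin's operator `U_m : ∑ a(n) qⁿ ↦ ∑ a(mn) qⁿ` on formal power series, which extracts the
terms whose exponents are divisible by `m`. -/
noncomputable def atkinU (m : ℕ) : R⟦X⟧ →ₗ[R] R⟦X⟧ where
  toFun f := mk fun n ↦ coeff (m * n) f
  map_add' f g := by ext; simp
  map_smul' c f := by ext; simp

@[simp]
theorem coeff_atkinU (m n : ℕ) (f : R⟦X⟧) : coeff n (atkinU m f) = coeff (m * n) f := by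
  simp [atkinU]

theorem continuous_atkinU [TopologicalSpace R] (m : ℕ) :
    Continuous (atkinU m : R⟦X⟧ →ₗ[R] R⟦X⟧) :=
  continuous_of_continuous_coeff fun d ↦ by
    simpa only [coeff_atkinU] using WithPiTopology.continuous_coeff R (m * d)

theorem atkinU_monomial_mul {m : ℕ} (hm : m ≠ 0) (n : ℕ) (a : R) :
    atkinU m (monomial (m * n) a) = monomial n a := by
  ext d
  simp [coeff_monomial, hm]

theorem atkinU_monomial_of_not_dvd {m n : ℕ} (h : ¬ m ∣ n) (a : R) :
    atkinU m (monomial n a) = 0 := by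
  ext d
  rw [coeff_atkinU, coeff_monomial, if_neg fun hd ↦ h ⟨d, hd.symm⟩, map_zero]

theorem atkinU_expand_mul {m : ℕ} (hm : m ≠ 0) (f g : R⟦X⟧) :
    atkinU m (expand m hm f * g) = f * atkinU m g := by
  ext n
  rw [coeff_atkinU, coeff_mul, coeff_mul]
  refine (sum_of_injOn (fun ij ↦ (m * ij.1, m * ij.2)) ?_ ?_ ?_ ?_).symm
  · rintro ⟨i, j⟩ - ⟨k, l⟩ - h
    simpa [hm] using h
  · rintro ⟨i, j⟩ hij
    simp only [SetLike.mem_coe, HasAntidiagonal.mem_antidiagonal] at hij ⊢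
    rw [← mul_add, hij]
  · rintro ⟨i, j⟩ hij hnot
    rw [coeff_expand_of_not_dvd, zero_mul]
    rintro ⟨k, rfl⟩
    rw [HasAntidiagonal.mem_antidiagonal] at hij
    obtain ⟨l, rfl⟩ : m ∣ j := (Nat.dvd_add_right ⟨k, rfl⟩).1 ⟨n, hij⟩
    refine hnot ⟨(k, l), ?_, rfl⟩
    simpa [← mul_add, hm] using hij
  · rintro ⟨i, j⟩ -
    rw [coeff_expand_mul, coeff_atkinU]

@[simp]
theorem atkinU_expand {m : ℕ} (hm : m ≠ 0) (f : R⟦X⟧) : atkinU m (expand m hm f) = f := by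
  ext n
  rw [coeff_atkinU, coeff_expand_mul]

theorem atkinU_pow_mul {p : ℕ} [Fact p.Prime] (f g : (ZMod p)⟦X⟧) :
    atkinU p (f ^ p * g) = f * atkinU p g := by
  rw [← expand_eq_pow (NeZero.ne p), atkinU_expand_mul]

end AtkinU

section DistinctParts

variable {R : Type*} [CommRing R]

/-- The generating function `∏ (1 + z qⁱ)`, over the `i ≥ 1` with `P i`, of the partitions into
distinct parts satisfying `P`, where `z` marks the number of parts. -/
noncomputable def distinctPartsSeries (P : ℕ → Prop) [DecidablePred P] (z : R) : R⟦X⟧ :=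
  Nat.Partition.genFun fun i c ↦ if P i ∧ c = 1 then z else 0

theorem constantCoeff_distinctPartsSeries (P : ℕ → Prop) [DecidablePred P] (z : R) :
    constantCoeff (distinctPartsSeries P z) = 1 := by
  rw [← coeff_zero_eq_constantCoeff_apply, distinctPartsSeries, Nat.Partition.coeff_genFun,
    Fintype.sum_unique]
  simp

theorem coeff_distinctPartsSeries_one (P : ℕ → Prop) [DecidablePred P] (n : ℕ) :
    coeff n (distinctPartsSeries P (1 : R)) =
      Fintype.card {p : n.Partition // p.parts.Nodup ∧ ∀ i ∈ p.parts, P i} := by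
  rw [distinctPartsSeries, Nat.Partition.coeff_genFun, Fintype.card_subtype, card_filter,
    Nat.cast_sum]
  refine sum_congr rfl fun p _ ↦ ?_
  rw [Finsupp.prod, Multiset.toFinsupp_support, prod_ite_zero, prod_const_one, Nat.cast_ite,
    Nat.cast_one, Nat.cast_zero]
  congr 1
  simp [Multiset.nodup_iff_count_eq_one, forall_and, and_comm]

variable [TopologicalSpace R] [T2Space R]

theorem hasProd_distinctPartsSeries (P : ℕ → Prop) [DecidablePred P] (z : R) :
    HasProd (fun i ↦ if P (i + 1) then 1 + C z * X ^ (i + 1) else 1)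
      (distinctPartsSeries P z) := by
  refine (Nat.Partition.hasProd_genFun _).congr_fun fun i ↦ ?_
  rw [tsum_eq_single 0 fun j hj ↦ by simp [hj]]
  by_cases h : P (i + 1) <;> simp [h, smul_eq_C_mul]

theorem tendsto_prod_range_distinctPartsSeries (z : R) :
    Tendsto (fun n ↦ ∏ k ∈ range n, (1 + C z * X ^ (2 * k + 1)))
      atTop (𝓝 (distinctPartsSeries (¬ 2 ∣ ·) z)) := by
  refine HasProd.tendsto_prod_nat ?_
  have h := hasProd_distinctPartsSeries (¬ 2 ∣ ·) z
  rw [← (mul_right_injective₀ (two_ne_zero (α := ℕ))).hasProd_iff] at h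
  · refine h.congr_fun fun k ↦ ?_
    rw [Function.comp_apply, if_pos (by lia)]
  · intro i hi
    rw [if_neg]
    rintro h
    exact hi ⟨i / 2, by simp only; lia⟩

variable [IsTopologicalRing R]

theorem distinctPartsSeries_mul_expand {P Q : ℕ → Prop} [DecidablePred P] [DecidablePred Q]
    {m : ℕ} (hm : m ≠ 0) (hQ : ∀ i, Q i ↔ P (m * i)) (z : R) :
    distinctPartsSeries (fun i ↦ P i ∧ ¬ m ∣ i) z * expand m hm (distinctPartsSeries Q z) =
      distinctPartsSeries P z := by
  let e : ℕ → ℕ := fun j ↦ m * (j + 1) - 1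
  have he_succ (j : ℕ) : e j + 1 = m * (j + 1) :=
    Nat.sub_add_cancel (Nat.mul_pos (Nat.pos_of_ne_zero hm) j.succ_pos)
  have he : e.Injective := fun j k hjk ↦ by
    have : m * (j + 1) = m * (k + 1) := by rw [← he_succ, ← he_succ, hjk]
    simpa [hm] using this
  have hexpand : HasProd (fun i ↦ if P (i + 1) ∧ m ∣ i + 1 then 1 + C z * X ^ (i + 1) else 1)
      (expand m hm (distinctPartsSeries Q z)) := by
    rw [← he.hasProd_iff]
    · refine ((hasProd_distinctPartsSeries Q z).map (expand m hm)
        (continuous_expand hm)).congr_fun fun j ↦ ?_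
      simp only [Function.comp_apply, he_succ, hQ, dvd_mul_right, and_true]
      split_ifs <;> simp [pow_mul, expand_C]
    · refine fun i hi ↦ if_neg fun ⟨_, j, hj⟩ ↦ hi ⟨j - 1, ?_⟩
      have hj0 : j ≠ 0 := by
        rintro rfl
        lia
      rw [← Nat.add_right_cancel_iff (n := 1), he_succ, Nat.sub_add_cancel (by lia), hj]
  refine ((hasProd_distinctPartsSeries _ z).mul hexpand).unique
    ((hasProd_distinctPartsSeries P z).congr_fun fun i ↦ ?_)
  by_cases hP : P (i + 1) <;> by_cases hi : m ∣ i + 1 <;> simp [hP, hi]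

theorem distinctPartsSeries_not_dvd_mul_pow {p : ℕ} [Fact p.Prime] [TopologicalSpace (ZMod p)]
    [IsTopologicalRing (ZMod p)] [T2Space (ZMod p)] {P : ℕ → Prop} [DecidablePred P]
    (hP : ∀ i, P i ↔ P (p * i)) (z : ZMod p) :
    distinctPartsSeries (fun i ↦ P i ∧ ¬ p ∣ i) z * distinctPartsSeries P z ^ (p - 1) = 1 := by
  have hne : distinctPartsSeries P z ≠ 0 := fun h ↦ by
    simpa [h] using constantCoeff_distinctPartsSeries P z
  refine mul_right_cancel₀ hne ?_
  rw [mul_assoc, ← pow_succ, Nat.sub_add_cancel NeZero.one_le, ← expand_eq_pow (NeZero.ne p),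
    distinctPartsSeries_mul_expand _ hP, one_mul]

theorem mk_card_restricted_mul_distinctPartsSeries (P : ℕ → Prop) [DecidablePred P] :
    (mk fun n ↦ (#(Nat.Partition.restricted n P) : R)) * distinctPartsSeries P (-1) = 1 := by
  refine ((Nat.Partition.hasProd_powerSeriesMk_card_restricted R P).mul
    (hasProd_distinctPartsSeries P (-1))).unique (hasProd_one.congr_fun fun i ↦ ?_)
  split_ifs
  · have h := WithPiTopology.tsum_pow_mul_one_sub_of_constantCoeff_eq_zero
      (f := (X : R⟦X⟧) ^ (i + 1)) (by simp)
    simpa [pow_mul, sub_eq_add_neg] using h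
  · rw [one_mul]

theorem mk_Rbar_mul_distinctPartsSeries (ℓ μ : ℕ) :
    (mk fun n ↦ (Rbar ℓ μ n : R)) * distinctPartsSeries (fun i ↦ ¬ ℓ ∣ i ∧ ¬ μ ∣ i) (-1) =
      distinctPartsSeries (fun i ↦ ¬ ℓ ∣ i ∧ ¬ μ ∣ i) 1 := by
  have h : (mk fun n ↦ (Rbar ℓ μ n : R)) =
      (mk fun n ↦ (#(Nat.Partition.restricted n fun i ↦ ¬ ℓ ∣ i ∧ ¬ μ ∣ i) : R)) *
        distinctPartsSeries (fun i ↦ ¬ ℓ ∣ i ∧ ¬ μ ∣ i) 1 := by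
    ext n
    rw [coeff_mul, coeff_mk, Rbar, Nat.cast_sum]
    refine sum_congr rfl fun ij _ ↦ ?_
    rw [coeff_mk, coeff_distinctPartsSeries_one, Nat.cast_mul, regularCount, Fintype.card_subtype]
    rfl
  rw [h, mul_right_comm, mk_card_restricted_mul_distinctPartsSeries, one_mul]

end DistinctParts

section FormalTheta

variable {R : Type*} [CommRing R] [TopologicalSpace R]

/-- The theta series `∑ₓ zˣ q^(k x²)`, `x` ranging over `ℤ`, for a unit `z` of the coefficient
ring: Ramanujan's `φ(qᵏ)` and `φ(-qᵏ)` (the latter for odd `k`) are the cases `z = 1` and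
`z = -1`. -/
noncomputable def formalTheta (z : Rˣ) (k : ℕ) : R⟦X⟧ :=
  ∑' x : ℤ, monomial (k * x.natAbs ^ 2) ((z ^ x : Rˣ) : R)

theorem tendsto_mul_natAbs_sq_cofinite_atTop (k : ℕ) [NeZero k] :
    Tendsto (fun x : ℤ ↦ k * x.natAbs ^ 2) cofinite atTop := by
  refine tendsto_atTop.2 fun b ↦ eventually_cofinite.2 <|
    (Set.finite_Icc (-(b : ℤ)) b).subset fun x hx ↦ ?_
  simp only [Set.mem_ofPred_eq, not_le, Set.mem_Icc] at hx ⊢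
  have : x.natAbs < b := calc
    x.natAbs ≤ x.natAbs ^ 2 := Nat.le_self_pow two_ne_zero _
    _ ≤ k * x.natAbs ^ 2 := Nat.le_mul_of_pos_left _ (NeZero.pos k)
    _ < b := hx
  lia

theorem tendsto_binaryForm_cofinite_atTop (k l : ℕ) [NeZero k] [NeZero l] :
    Tendsto (fun p : ℤ × ℤ ↦ k * p.1.natAbs ^ 2 + l * p.2.natAbs ^ 2) cofinite atTop :=
  tendsto_add_cofinite_atTop (e := fun x : ℤ ↦ k * x.natAbs ^ 2)
    (e' := fun y : ℤ ↦ l * y.natAbs ^ 2)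
    (tendsto_mul_natAbs_sq_cofinite_atTop k) (tendsto_mul_natAbs_sq_cofinite_atTop l)

theorem hasSum_formalTheta (z : Rˣ) (k : ℕ) [NeZero k] :
    HasSum (fun x : ℤ ↦ monomial (k * x.natAbs ^ 2) ((z ^ x : Rˣ) : R)) (formalTheta z k) :=
  (summable_monomial (tendsto_mul_natAbs_sq_cofinite_atTop k) _).hasSum

theorem constantCoeff_formalTheta [T2Space R] (z : Rˣ) (k : ℕ) [NeZero k] :
    constantCoeff (formalTheta z k) = 1 := by
  have h := (WithPiTopology.hasSum_iff_hasSum_coeff R).1 (hasSum_formalTheta z k) 0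
  rw [coeff_zero_eq_constantCoeff_apply] at h
  refine h.unique ?_
  convert hasSum_single (0 : ℤ) fun x hx ↦ ?_ using 1
  · simp
  · simp [coeff_monomial, NeZero.ne k, hx]

theorem expand_formalTheta [T2Space R] (z : Rˣ) (k : ℕ) [NeZero k] {m : ℕ} (hm : m ≠ 0) :
    expand m hm (formalTheta z k) = formalTheta z (m * k) := by
  have : NeZero m := ⟨hm⟩
  refine ((hasSum_formalTheta z k).map (expand m hm) (continuous_expand hm)).unique ?_
  simpa only [Function.comp_def, expand_monomial, mul_assoc] using hasSum_formalTheta z (m * k)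

theorem formalTheta_pow_prime {p : ℕ} [Fact p.Prime] [TopologicalSpace (ZMod p)]
    [T2Space (ZMod p)] (z : (ZMod p)ˣ) (k : ℕ) [NeZero k] :
    formalTheta z k ^ p = formalTheta z (p * k) := by
  rw [← expand_eq_pow (NeZero.ne p), expand_formalTheta]

theorem formalTheta_ne_zero [T2Space R] [Nontrivial R] (z : Rˣ) (k : ℕ) [NeZero k] :
    formalTheta z k ≠ 0 := fun h ↦ by
  simpa [h] using constantCoeff_formalTheta z k

variable [IsTopologicalRing R] [T2Space R]

theorem hasSum_formalTheta_mul (z w : Rˣ) (k l : ℕ) [NeZero k] [NeZero l] :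
    HasSum (fun p : ℤ × ℤ ↦ monomial (k * p.1.natAbs ^ 2 + l * p.2.natAbs ^ 2)
      ((z ^ p.1 * w ^ p.2 : Rˣ) : R)) (formalTheta z k * formalTheta w l) := by
  simpa only [monomial_mul_monomial, Units.val_mul] using
    (hasSum_formalTheta z k).mul (hasSum_formalTheta w l) <| by
      simpa only [monomial_mul_monomial] using
        summable_monomial (tendsto_binaryForm_cofinite_atTop k l) _

theorem injective_add_sub : Function.Injective fun p : ℤ × ℤ ↦ (p.1 + p.2, p.1 - p.2) := by
  rintro ⟨a, b⟩ ⟨c, d⟩ h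
  simp only [Prod.mk.injEq] at h ⊢
  lia

theorem mem_range_add_sub_iff {p : ℤ × ℤ} :
    p ∈ Set.range (fun q : ℤ × ℤ ↦ (q.1 + q.2, q.1 - q.2)) ↔ (Even p.1 ↔ Even p.2) := by
  rw [← Int.even_add]
  refine ⟨?_, fun ⟨a, ha⟩ ↦ ⟨(a, p.1 - a), Prod.ext ?_ ?_⟩⟩
  · rintro ⟨⟨a, b⟩, rfl⟩
    exact ⟨a, by simp⟩
  all_goals simp only; lia

theorem formalTheta_one_mul_formalTheta_neg_one (k : ℕ) [NeZero k] :
    formalTheta (1 : Rˣ) k * formalTheta (-1) k = formalTheta (-1) (2 * k) ^ 2 := by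
  have hf := hasSum_formalTheta_mul (1 : Rˣ) (-1) k k
  set f := fun p : ℤ × ℤ ↦ (monomial (k * p.1.natAbs ^ 2 + k * p.2.natAbs ^ 2)
    ((1 ^ p.1 * (-1) ^ p.2 : Rˣ) : R) : R⟦X⟧)
  let e : ℤ × ℤ → ℤ × ℤ := fun p ↦ (p.1 + p.2, p.1 - p.2)
  have hfe : HasSum (f ∘ e) (formalTheta (-1) (2 * k) ^ 2) := by
    rw [sq]
    refine (hasSum_formalTheta_mul (-1 : Rˣ) (-1) (2 * k) (2 * k)).congr_fun fun p ↦ ?_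
    have hexp : k * (p.1 + p.2).natAbs ^ 2 + k * (p.1 - p.2).natAbs ^ 2 =
        2 * k * p.1.natAbs ^ 2 + 2 * k * p.2.natAbs ^ 2 := by
      zify
      simp only [sq_abs]
      ring
    have hsign : (-1 : Rˣ) ^ (p.1 - p.2) = (-1) ^ p.1 * (-1) ^ p.2 := by
      simp [zpow_sub, ← inv_zpow]
    simp only [Function.comp_apply, f, e, hexp, one_zpow, one_mul, hsign]
  -- The terms with `x` even, `y` odd cancel those with `x` odd, `y` even under `x ↔ y`.
  let s : Set (ℤ × ℤ) := {p | Even p.1 ∧ ¬ Even p.2}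
  obtain ⟨a, ha⟩ : Summable (s.indicator f) := by
    refine (summable_monomial (tendsto_binaryForm_cofinite_atTop k k)
      (s.indicator fun p ↦ ((1 ^ p.1 * (-1) ^ p.2 : Rˣ) : R))).congr fun p ↦ ?_
    by_cases hp : p ∈ s <;> simp [hp, f]
  have hcancel (p : ℤ × ℤ) : (Set.range e).indicator f p =
      f p - s.indicator f p + s.indicator f p.swap := by
    have hsign (n : ℤ) : (-1 : Rˣ) ^ n = if Even n then 1 else -1 := by
      split_ifs with hn
      exacts [hn.neg_one_zpow, (Int.not_even_iff_odd.1 hn).neg_one_zpow]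
    have hrange : p ∈ Set.range e ↔ (Even p.1 ↔ Even p.2) := mem_range_add_sub_iff
    by_cases hx : Even p.1 <;> by_cases hy : Even p.2 <;>
      simp [hrange, s, f, hx, hy, hsign, add_comm, -Int.not_even_iff_odd]
  refine HasSum.unique ?_ ((hasSum_indicator_range_iff injective_add_sub).2 hfe)
  simpa using ((hf.sub ha).add ((Equiv.prodComm ℤ ℤ).hasSum_iff.2 ha)).congr_fun hcancel

end FormalTheta

section HeckeIdentity

variable {R : Type*} [CommRing R]

theorem hasSum_indicator_range_atkinU [TopologicalSpace R] [IsTopologicalRing R] [T2Space R]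
    {p k l k' l' : ℕ} (hp : p ≠ 0) [NeZero k] [NeZero l] {z w z' w' : Rˣ}
    {e : ℤ × ℤ → ℤ × ℤ} (he : e.Injective)
    (hexp : ∀ q, k' * (e q).1.natAbs ^ 2 + l' * (e q).2.natAbs ^ 2 =
      p * (k * q.1.natAbs ^ 2 + l * q.2.natAbs ^ 2))
    (hcoeff : ∀ q, z' ^ (e q).1 * w' ^ (e q).2 = z ^ q.1 * w ^ q.2) :
    HasSum ((Set.range e).indicator fun q ↦ atkinU p
      (monomial (k' * q.1.natAbs ^ 2 + l' * q.2.natAbs ^ 2) ((z' ^ q.1 * w' ^ q.2 : Rˣ) : R)))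
      (formalTheta z k * formalTheta w l) := by
  refine (hasSum_indicator_range_iff he).2 ((hasSum_formalTheta_mul z w k l).congr_fun fun q ↦ ?_)
  simp only [Function.comp_apply, hexp, hcoeff, atkinU_monomial_mul hp]

theorem dvd_natAbs_sq_add_mul_natAbs_sq_iff {m : ℕ} (hp : (m + 1).Prime) (x y : ℤ) :
    m + 1 ∣ 1 * x.natAbs ^ 2 + m * y.natAbs ^ 2 ↔
      ((m + 1 : ℕ) : ℤ) ∣ x - y ∨ ((m + 1 : ℕ) : ℤ) ∣ x + y := by
  rw [← Int.natCast_dvd_natCast, ← (Nat.prime_iff_prime_int.1 hp).dvd_mul]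
  have : ((1 * x.natAbs ^ 2 + m * y.natAbs ^ 2 : ℕ) : ℤ) =
      (x - y) * (x + y) + (m + 1 : ℕ) * y ^ 2 := by
    push_cast
    simp only [sq_abs]
    ring
  rw [this, dvd_add_left (dvd_mul_right _ _)]

theorem dvd_sub_and_dvd_add_iff {p : ℕ} (hp : p.Prime) (hp2 : p ≠ 2) {x y : ℤ} :
    (p : ℤ) ∣ x - y ∧ (p : ℤ) ∣ x + y ↔ (p : ℤ) ∣ x ∧ (p : ℤ) ∣ y := by
  refine ⟨fun ⟨h₁, h₂⟩ ↦ ?_, fun ⟨hx, hy⟩ ↦ ⟨dvd_sub hx hy, dvd_add hx hy⟩⟩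
  have hx : (p : ℤ) ∣ 2 * x := by simpa [two_mul] using dvd_add h₁ h₂
  have hcop : IsCoprime (p : ℤ) 2 := by
    exact_mod_cast Nat.isCoprime_iff_coprime.2 ((Nat.coprime_primes hp Nat.prime_two).2 hp2)
  have hx' := hcop.dvd_of_dvd_mul_left hx
  exact ⟨hx', (dvd_sub_right hx').1 h₁⟩

theorem injective_sub_mul_add (m : ℕ) :
    Function.Injective fun q : ℤ × ℤ ↦ (q.1 - m * q.2, q.1 + q.2) := by
  rintro ⟨u, v⟩ ⟨u', v'⟩ h
  simp only [Prod.mk.injEq] at h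
  have hv : ((m : ℤ) + 1) * (v - v') = 0 := by linear_combination h.2 - h.1
  obtain rfl : v = v' := by
    rcases mul_eq_zero.1 hv with h | h <;> lia
  simpa using h.2

theorem mem_range_sub_mul_add_iff {m : ℕ} {p : ℤ × ℤ} :
    p ∈ Set.range (fun q : ℤ × ℤ ↦ (q.1 - m * q.2, q.1 + q.2)) ↔
      ((m + 1 : ℕ) : ℤ) ∣ p.1 - p.2 := by
  constructor
  · rintro ⟨q, rfl⟩
    exact ⟨-q.2, by push_cast; ring⟩
  · rintro ⟨v, hv⟩
    push_cast at hv
    exact ⟨(p.2 + v, -v), Prod.ext (by linear_combination -hv) (by simp)⟩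

theorem injective_natCast_mul {p : ℕ} (hp : p ≠ 0) :
    Function.Injective fun q : ℤ × ℤ ↦ ((p : ℤ) * q.1, (p : ℤ) * q.2) := by
  rintro ⟨u, v⟩ ⟨u', v'⟩ h
  simpa [hp] using h

theorem mem_range_natCast_mul_iff {p : ℕ} {x : ℤ × ℤ} :
    x ∈ Set.range (fun q : ℤ × ℤ ↦ ((p : ℤ) * q.1, (p : ℤ) * q.2)) ↔
      (p : ℤ) ∣ x.1 ∧ (p : ℤ) ∣ x.2 := by
  constructor
  · rintro ⟨q, rfl⟩
    simp
  · rintro ⟨⟨u, hu⟩, v, hv⟩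
    exact ⟨(u, v), Prod.ext hu.symm hv.symm⟩

theorem add_indicator_range_natCast_mul {M : Type*} [AddCommMonoid M] {m : ℕ}
    (hp : (m + 1).Prime) (hm : m ≠ 1) {f : ℤ × ℤ → M} (hneg : ∀ x y, f (-x, y) = f (x, y))
    (hzero : ∀ x y, ¬ m + 1 ∣ 1 * x.natAbs ^ 2 + m * y.natAbs ^ 2 → f (x, y) = 0) (x y : ℤ) :
    f (x, y) +
        (Set.range fun q : ℤ × ℤ ↦ (((m + 1 : ℕ) : ℤ) * q.1, ((m + 1 : ℕ) : ℤ) * q.2)).indicator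
          f (x, y) =
      (Set.range fun q : ℤ × ℤ ↦ (q.1 - m * q.2, q.1 + q.2)).indicator f (x, y) +
        (Set.range fun q : ℤ × ℤ ↦ (q.1 - m * q.2, q.1 + q.2)).indicator f (-x, y) := by
  have hxy : (-x, y) ∈ Set.range (fun q : ℤ × ℤ ↦ (q.1 - m * q.2, q.1 + q.2)) ↔
      ((m + 1 : ℕ) : ℤ) ∣ x + y := by
    rw [mem_range_sub_mul_add_iff, ← neg_add', dvd_neg]
  have hd : (x, y) ∈ Set.range
      (fun q : ℤ × ℤ ↦ (((m + 1 : ℕ) : ℤ) * q.1, ((m + 1 : ℕ) : ℤ) * q.2)) ↔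
        ((m + 1 : ℕ) : ℤ) ∣ x - y ∧ ((m + 1 : ℕ) : ℤ) ∣ x + y := by
    rw [mem_range_natCast_mul_iff, dvd_sub_and_dvd_add_iff hp (by lia)]
  have hf := hzero x y
  rw [dvd_natAbs_sq_add_mul_natAbs_sq_iff hp, not_or] at hf
  classical
  simp only [Set.indicator_apply, hxy, hd, mem_range_sub_mul_add_iff, hneg]
  by_cases h₁ : ((m + 1 : ℕ) : ℤ) ∣ x - y <;> by_cases h₂ : ((m + 1 : ℕ) : ℤ) ∣ x + y <;>
    simp only [h₁, h₂, hf, and_true, and_false, if_true, if_false, add_zero, zero_add,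
      not_false_eq_true]

theorem atkinU_formalTheta_one_mul_formalTheta [TopologicalSpace R] [IsTopologicalRing R]
    [T2Space R] {m : ℕ} (hp : (m + 1).Prime) (hm : m ≠ 1) (w : Rˣ) :
    atkinU (m + 1) (formalTheta 1 1 * formalTheta w m) +
        formalTheta 1 (m + 1) * formalTheta (w ^ (m + 1)) ((m + 1) * m) =
      2 * (formalTheta w 1 * formalTheta w m) := by
  have : NeZero m := ⟨by rintro rfl; exact Nat.not_prime_one hp⟩
  have hf := (hasSum_formalTheta_mul (1 : Rˣ) w 1 m).map _ (continuous_atkinU (m + 1))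
  set f := fun q : ℤ × ℤ ↦ atkinU (m + 1)
    (monomial (1 * q.1.natAbs ^ 2 + m * q.2.natAbs ^ 2) ((1 ^ q.1 * w ^ q.2 : Rˣ) : R))
  -- `e` and its conjugate are multiplication by `1 ± √-m`, of norm `m + 1`, in `ℤ[√-m]`.
  let e : ℤ × ℤ → ℤ × ℤ := fun q ↦ (q.1 - m * q.2, q.1 + q.2)
  have he : HasSum ((Set.range e).indicator f) (formalTheta w 1 * formalTheta w m) := by
    refine hasSum_indicator_range_atkinU hp.ne_zero (injective_sub_mul_add m)
      (fun q ↦ ?_) fun q ↦ by simp [e, zpow_add]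
    zify
    simp only [e, sq_abs]
    ring
  let d : ℤ × ℤ → ℤ × ℤ := fun q ↦ ((m + 1 : ℕ) * q.1, (m + 1 : ℕ) * q.2)
  have hd : HasSum ((Set.range d).indicator f)
      (formalTheta 1 (m + 1) * formalTheta (w ^ (m + 1)) ((m + 1) * m)) := by
    refine hasSum_indicator_range_atkinU hp.ne_zero (injective_natCast_mul hp.ne_zero)
      (fun q ↦ ?_) fun q ↦ by simp only [d, one_zpow, zpow_mul, zpow_natCast, one_pow]
    simp only [d, Int.natAbs_mul, Int.natAbs_natCast]
    ring
  have hdecomp := add_indicator_range_natCast_mul hp hm (f := f) (by simp [f])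
    fun x y h ↦ atkinU_monomial_of_not_dvd h _
  let ν : ℤ × ℤ ≃ ℤ × ℤ := (Equiv.neg ℤ).prodCongr (Equiv.refl ℤ)
  rw [two_mul]
  exact (hf.add hd).unique ((he.add (ν.hasSum_iff.2 he)).congr_fun fun q ↦ hdecomp q.1 q.2)

end HeckeIdentity

section Dissection

variable {R : Type*} [CommRing R]

/-- The power series `f` has only terms `qⁿ` with `n ≡ r (mod m)`. The pieces of the `m`-dissection
of a power series have this property. -/
def SupportedOnResidue (m r : ℕ) (f : R⟦X⟧) : Prop :=
  ∀ n, ¬ n ≡ r [MOD m] → coeff n f = 0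

theorem supportedOnResidue_monomial {m r n : ℕ} (h : n ≡ r [MOD m]) (a : R) :
    SupportedOnResidue m r (monomial n a) := fun d hd ↦ by
  rw [coeff_monomial, if_neg]
  rintro rfl
  exact hd h

theorem SupportedOnResidue.of_hasSum [TopologicalSpace R] [T2Space R] {ι : Type*} {m r : ℕ}
    {f : ι → R⟦X⟧} {a : R⟦X⟧} (ha : HasSum f a) (hf : ∀ i, SupportedOnResidue m r (f i)) :
    SupportedOnResidue m r a := fun n hn ↦ by
  refine ((WithPiTopology.hasSum_iff_hasSum_coeff R).1 ha n).unique ?_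
  simpa only [hf _ n hn] using hasSum_zero

theorem SupportedOnResidue.mul {m r s : ℕ} {f g : R⟦X⟧} (hf : SupportedOnResidue m r f)
    (hg : SupportedOnResidue m s g) : SupportedOnResidue m (r + s) (f * g) := fun n hn ↦ by
  rw [coeff_mul]
  refine sum_eq_zero fun ij hij ↦ ?_
  by_cases hi : ij.1 ≡ r [MOD m]
  · rw [hg _ fun hj ↦ hn (HasAntidiagonal.mem_antidiagonal.1 hij ▸ hi.add hj), mul_zero]
  · rw [hf _ hi, zero_mul]

theorem SupportedOnResidue.atkinU_eq_zero {m r : ℕ} {f : R⟦X⟧} (hf : SupportedOnResidue m r f)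
    (hr : ¬ m ∣ r) : atkinU m f = 0 := by
  ext n
  rw [coeff_atkinU, map_zero]
  exact hf _ fun h ↦ hr ((h.dvd_iff dvd_rfl).1 ⟨n, rfl⟩)

theorem atkinU_mul_sq {m r s : ℕ} (hm : m ≠ 0) (hrs : m ∣ r + s) (hs : ¬ m ∣ 2 * s)
    {f g a b : R⟦X⟧} (hf : SupportedOnResidue m r (f - expand m hm a))
    (hg : SupportedOnResidue m s (g - expand m hm b)) :
    atkinU m (f * g ^ 2) = 2 * b * atkinU m (f * g) - a * b ^ 2 := by
  have hs' : ¬ m ∣ s := fun h ↦ hs (h.mul_left 2)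
  have hr : ¬ m ∣ r := fun h ↦ hs' ((Nat.dvd_add_right h).1 hrs)
  have hrss : ¬ m ∣ r + (s + s) := by rwa [← add_assoc, Nat.dvd_add_right hrs]
  have hf₀ := hf.atkinU_eq_zero hr
  have hg₀ := hg.atkinU_eq_zero hs'
  have hgg₀ := (hg.mul hg).atkinU_eq_zero (by rwa [← two_mul])
  have hfgg₀ := (hf.mul (hg.mul hg)).atkinU_eq_zero hrss
  generalize hf' : f - expand m hm a = f' at *
  generalize hg' : g - expand m hm b = g' at *
  rw [sub_eq_iff_eq_add'] at hf' hg'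
  have hfg : atkinU m (f * g) = a * b + atkinU m (f' * g') := by
    rw [hf', hg', show (expand m hm a + f') * (expand m hm b + g') =
        expand m hm (a * b) + expand m hm a * g' + expand m hm b * f' + f' * g' by
      rw [map_mul]; ring]
    simp only [map_add, atkinU_expand, atkinU_expand_mul, hf₀, hg₀, mul_zero, add_zero]
  have hfgg : atkinU m (f * g ^ 2) = a * b ^ 2 + 2 * b * atkinU m (f' * g') := by
    rw [hf', hg', show (expand m hm a + f') * (expand m hm b + g') ^ 2 =
        expand m hm (a * b ^ 2) + expand m hm (2 * a * b) * g' + expand m hm (b ^ 2) * f' +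
          expand m hm a * (g' * g') + expand m hm (2 * b) * (f' * g') + f' * (g' * g') by
      simp only [map_mul, map_pow, map_ofNat]; ring]
    simp only [map_add, atkinU_expand, atkinU_expand_mul, hf₀, hg₀, hgg₀, hfgg₀, mul_zero,
      add_zero]
  rw [hfgg, hfg]
  ring

variable [TopologicalSpace R] [IsTopologicalRing R] [T2Space R]

theorem supportedOnResidue_three_formalTheta_sub_expand (z : Rˣ) (k : ℕ) [NeZero k] :
    SupportedOnResidue 3 k
      (formalTheta z k - expand 3 three_ne_zero (formalTheta (z ^ 3) (3 * k))) := by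
  have hf := hasSum_formalTheta z k
  set f := fun x : ℤ ↦ (monomial (k * x.natAbs ^ 2) ((z ^ x : Rˣ) : R) : R⟦X⟧)
  let e : ℤ → ℤ := (3 * ·)
  have he : HasSum ((Set.range e).indicator f)
      (expand 3 three_ne_zero (formalTheta (z ^ 3) (3 * k))) := by
    rw [expand_formalTheta, hasSum_indicator_range_iff (mul_right_injective₀ three_ne_zero)]
    refine (hasSum_formalTheta (z ^ 3) (3 * (3 * k))).congr_fun fun x ↦ ?_
    have hexp : k * (3 * x).natAbs ^ 2 = 3 * (3 * k) * x.natAbs ^ 2 := by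
      rw [Int.natAbs_mul]
      ring
    have hz : z ^ (3 * x) = (z ^ 3) ^ x := zpow_mul z 3 x
    simp only [Function.comp_apply, f, hexp, hz]
  refine SupportedOnResidue.of_hasSum (hf.sub he) fun x ↦ ?_
  by_cases hx : x ∈ Set.range e
  · simp [hx, SupportedOnResidue]
  · have hx3 : ¬ 3 ∣ x := fun ⟨y, hy⟩ ↦ hx ⟨y, hy.symm⟩
    rw [Set.indicator_of_notMem hx, sub_zero]
    refine supportedOnResidue_monomial ?_ _
    have hx2 : x.natAbs ^ 2 ≡ 1 [MOD 3] := by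
      have : x.natAbs % 3 = 1 ∨ x.natAbs % 3 = 2 := by lia
      rcases this with h | h <;> simp [Nat.ModEq, Nat.pow_mod, h]
    simpa using hx2.mul_left k

theorem atkinU_three_formalTheta {z : Rˣ} {k : ℕ} [NeZero k] (hk : ¬ 3 ∣ k) :
    atkinU 3 (formalTheta z k) = formalTheta (z ^ 3) (3 * k) := by
  have h := (supportedOnResidue_three_formalTheta_sub_expand z k).atkinU_eq_zero hk
  rwa [map_sub, atkinU_expand, sub_eq_zero] at h

theorem atkinU_three_formalTheta_one_mul_formalTheta_sq (w : Rˣ) :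
    atkinU 3 (formalTheta 1 1 * formalTheta w 2 ^ 2) =
      4 * (formalTheta w 1 * formalTheta w 2 * formalTheta (w ^ 3) 6) -
        3 * (formalTheta 1 3 * formalTheta (w ^ 3) 6 ^ 2) := by
  have h := atkinU_formalTheta_one_mul_formalTheta (m := 2) Nat.prime_three (by lia) w
  have hf := supportedOnResidue_three_formalTheta_sub_expand (1 : Rˣ) 1
  rw [one_pow] at hf
  rw [atkinU_mul_sq three_ne_zero (by lia) (by lia) hf
    (supportedOnResidue_three_formalTheta_sub_expand w 2)]
  linear_combination 2 * formalTheta (w ^ 3) 6 * h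

end Dissection

section JacobiProduct

variable (R : Type*) [CommRing R]

/-- The numerator `∏_{k < n} (1 + q^(2k+1) Y) (Y + q^(2k+1))` of the finite Jacobi triple product,
as a polynomial in `Y` over the power series in `q`. -/
noncomputable def jacobiPoly (n : ℕ) : Polynomial R⟦X⟧ :=
  ∏ k ∈ range n, (1 + Polynomial.C (X ^ (2 * k + 1)) * Polynomial.X) *
    (Polynomial.X + Polynomial.C (X ^ (2 * k + 1)))

theorem natDegree_jacobiPoly_le (n : ℕ) : (jacobiPoly R n).natDegree ≤ 2 * n := by
  refine (Polynomial.natDegree_prod_le _ _).trans ?_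
  refine (sum_le_card_nsmul _ _ 2 fun k _ ↦ ?_).trans_eq (by simp [mul_comm])
  compute_degree

theorem jacobiPoly_comp_mul (n : ℕ) :
    (jacobiPoly R n).comp (Polynomial.C (X ^ 2) * Polynomial.X) *
        (Polynomial.C X * Polynomial.X + Polynomial.C (X ^ (2 * n))) =
      Polynomial.C (X ^ (2 * n)) * jacobiPoly R n *
        (1 + Polynomial.C (X ^ (2 * n + 1)) * Polynomial.X) := by
  induction n with
  | zero => simp [jacobiPoly, add_comm]
  | succ n ih =>
    rw [jacobiPoly, prod_range_succ, ← jacobiPoly]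
    simp only [Polynomial.mul_comp, Polynomial.add_comp, Polynomial.one_comp, Polynomial.C_comp,
      Polynomial.X_comp]
    simp only [map_pow] at ih ⊢
    linear_combination Polynomial.C X * (1 + Polynomial.C X ^ (2 * n) * Polynomial.C X ^ 3 *
      Polynomial.X) * (Polynomial.C X * Polynomial.X + Polynomial.C X ^ (2 * n) *
      Polynomial.C X ^ 2) * ih

theorem coeff_jacobiPoly_succ_mul (n i : ℕ) :
    (jacobiPoly R n).coeff (i + 1) * (X ^ (2 * n) - X ^ (2 * n + 2 * i + 2)) =
      (jacobiPoly R n).coeff i * (X ^ (2 * i + 1) - X ^ (4 * n + 1)) := by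
  have h := congrArg (Polynomial.coeff · (i + 1)) (jacobiPoly_comp_mul R n)
  simp only [mul_add, mul_one, ← mul_assoc, Polynomial.coeff_add, Polynomial.coeff_mul_X,
    Polynomial.coeff_mul_C, Polynomial.coeff_C_mul, Polynomial.comp_C_mul_X_coeff] at h
  linear_combination -h

variable {R} in
theorem X_pow_dvd_sub_of_recurrence {n : ℕ} {d : ℕ → R⟦X⟧}
    (hd : ∀ j < n, d (j + 1) * (1 - X ^ (2 * n + 2 * j + 2)) =
      d j * (X ^ (2 * j + 1) - X ^ (2 * n + 1))) {j : ℕ} (hj : j ≤ n) :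
    X ^ (2 * n + 1) ∣ d j - d 0 * X ^ j ^ 2 := by
  induction j with
  | zero => simp
  | succ j ih =>
    obtain ⟨g, hg⟩ := ih (by lia)
    refine ⟨X ^ (2 * j + 1) * g + d (j + 1) * X ^ (2 * j + 1) - d j, ?_⟩
    linear_combination hd j hj + X ^ (2 * j + 1) * hg

theorem X_pow_dvd_coeff_jacobiPoly_add_sub (n j : ℕ) (hj : j ≤ n) :
    X ^ (2 * n + 1) ∣
      (jacobiPoly R n).coeff (n + j) - (jacobiPoly R n).coeff n * X ^ j ^ 2 := by
  refine X_pow_dvd_sub_of_recurrence (d := fun j ↦ (jacobiPoly R n).coeff (n + j))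
    (fun j _ ↦ X_pow_mul_cancel (k := 2 * n) ?_) hj
  linear_combination coeff_jacobiPoly_succ_mul R n (n + j)

theorem X_pow_dvd_coeff_jacobiPoly_sub_sub (n j : ℕ) (hj : j ≤ n) :
    X ^ (2 * n + 1) ∣
      (jacobiPoly R n).coeff (n - j) - (jacobiPoly R n).coeff n * X ^ j ^ 2 := by
  refine X_pow_dvd_sub_of_recurrence (d := fun j ↦ (jacobiPoly R n).coeff (n - j))
    (fun j hjn ↦ ?_) hj
  obtain ⟨i, rfl⟩ := Nat.exists_eq_add_of_lt hjn
  have h := coeff_jacobiPoly_succ_mul R (j + i + 1) i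
  rw [show j + i + 1 - (j + 1) = i by lia, show j + i + 1 - j = i + 1 by lia]
  refine X_pow_mul_cancel (k := 2 * i + 1) ?_
  linear_combination -h

variable {R}

theorem eval_jacobiPoly (n : ℕ) (z : Rˣ) :
    (jacobiPoly R n).eval (C (z : R)) = C ((z ^ n : Rˣ) : R) *
      ((∏ k ∈ range n, (1 + C (z : R) * X ^ (2 * k + 1))) *
        ∏ k ∈ range n, (1 + C ((z⁻¹ : Rˣ) : R) * X ^ (2 * k + 1))) := by
  have hz : C (z : R) * C ((z⁻¹ : Rˣ) : R) = 1 := by rw [← map_mul, Units.mul_inv, map_one]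
  rw [jacobiPoly, Polynomial.eval_prod, Units.val_pow_eq_pow_val, map_pow, ← prod_mul_distrib,
    ← card_range n, ← prod_const, card_range, ← prod_mul_distrib]
  refine prod_congr rfl fun k _ ↦ ?_
  simp only [Polynomial.eval_mul, Polynomial.eval_add, Polynomial.eval_one, Polynomial.eval_C,
    Polynomial.eval_X]
  linear_combination -(1 + C (z : R) * X ^ (2 * k + 1)) * X ^ (2 * k + 1) * hz

theorem eval_jacobiPoly_eq_sum (n : ℕ) (z : Rˣ) :
    (jacobiPoly R n).eval (C (z : R)) = C ((z ^ n : Rˣ) : R) *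
      ∑ x ∈ Icc (-n : ℤ) n, (jacobiPoly R n).coeff (n + x).toNat * C ((z ^ x : Rˣ) : R) := by
  rw [Polynomial.eval_eq_sum_range' (Nat.lt_succ_of_le (natDegree_jacobiPoly_le R n)), mul_sum]
  refine sum_nbij' (fun i ↦ (i : ℤ) - n) (fun x ↦ (n + x).toNat) ?_ ?_ ?_ ?_ fun i _ ↦ ?_
  · simp only [mem_range, mem_Icc]; lia
  · simp only [mem_range, mem_Icc]; lia
  · simp
  · simp only [mem_Icc]; lia
  · have hz : z ^ i = z ^ n * z ^ ((i : ℤ) - n) := by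
      rw [← zpow_natCast, ← zpow_natCast, ← zpow_add, add_sub_cancel]
    rw [add_sub_cancel, Int.toNat_natCast, mul_left_comm, ← map_mul, ← Units.val_mul, ← hz,
      Units.val_pow_eq_pow_val, map_pow]

theorem X_pow_dvd_prod_mul_prod_sub (n : ℕ) (z : Rˣ) :
    X ^ (2 * n + 1) ∣
      (∏ k ∈ range n, (1 + C (z : R) * X ^ (2 * k + 1))) *
          (∏ k ∈ range n, (1 + C ((z⁻¹ : Rˣ) : R) * X ^ (2 * k + 1))) -
        (jacobiPoly R n).coeff n *
          ∑ x ∈ Icc (-n : ℤ) n, monomial (1 * x.natAbs ^ 2) ((z ^ x : Rˣ) : R) := by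
  have hz : IsUnit (C ((z ^ n : Rˣ) : R)) := (z ^ n).isUnit.map C
  rw [hz.mul_left_cancel ((eval_jacobiPoly n z).symm.trans (eval_jacobiPoly_eq_sum n z)), mul_sum,
    ← sum_sub_distrib]
  refine dvd_sum fun x hx ↦ ?_
  have hcoeff : X ^ (2 * n + 1) ∣
      (jacobiPoly R n).coeff (n + x).toNat - (jacobiPoly R n).coeff n * X ^ x.natAbs ^ 2 := by
    rw [mem_Icc] at hx
    rcases le_total 0 x with h0 | h0
    · rw [show (n + x).toNat = n + x.natAbs by lia]
      exact X_pow_dvd_coeff_jacobiPoly_add_sub R n _ (by lia)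
    · rw [show (n + x).toNat = n - x.natAbs by lia]
      exact X_pow_dvd_coeff_jacobiPoly_sub_sub R n _ (by lia)
  rw [one_mul, monomial_eq_C_mul_X_pow, ← mul_assoc, mul_right_comm, ← sub_mul]
  exact hcoeff.mul_right _

variable [TopologicalSpace R]

theorem tendsto_sum_Icc_formalTheta (z : Rˣ) (k : ℕ) [NeZero k] :
    Tendsto (fun n : ℕ ↦ ∑ x ∈ Icc (-n : ℤ) n, monomial (k * x.natAbs ^ 2) ((z ^ x : Rˣ) : R))
      atTop (𝓝 (formalTheta z k)) :=
  SummationFilter.hasSum_symmetricIcc_iff.1 <|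
    (hasSum_formalTheta z k).mono_left SummationFilter.LeAtTop.le_atTop

variable [IsTopologicalRing R] [T2Space R]

theorem formalTheta_mul_distinctPartsSeries (z w : Rˣ) :
    formalTheta w 1 * (distinctPartsSeries (¬ 2 ∣ ·) (z : R) *
        distinctPartsSeries (¬ 2 ∣ ·) ((z⁻¹ : Rˣ) : R)) =
      formalTheta z 1 * (distinctPartsSeries (¬ 2 ∣ ·) (w : R) *
        distinctPartsSeries (¬ 2 ∣ ·) ((w⁻¹ : Rˣ) : R)) := by
  have hlim (z w : Rˣ) := (tendsto_sum_Icc_formalTheta w 1).mul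
    ((tendsto_prod_range_distinctPartsSeries (z : R)).mul
      (tendsto_prod_range_distinctPartsSeries ((z⁻¹ : Rˣ) : R)))
  rw [← sub_eq_zero]
  refine tendsto_nhds_unique ((hlim z w).sub (hlim w z))
    ((WithPiTopology.tendsto_iff_coeff_tendsto R _ _ _).2 fun d ↦ ?_)
  refine tendsto_const_nhds.congr' ?_
  filter_upwards [eventually_gt_atTop d] with n hn
  have h := dvd_sub
    ((X_pow_dvd_prod_mul_prod_sub n z).mul_left
      (∑ x ∈ Icc (-n : ℤ) n, monomial (1 * x.natAbs ^ 2) ((w ^ x : Rˣ) : R)))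
    ((X_pow_dvd_prod_mul_prod_sub n w).mul_left
      (∑ x ∈ Icc (-n : ℤ) n, monomial (1 * x.natAbs ^ 2) ((z ^ x : Rˣ) : R)))
  rw [map_zero, ← X_pow_dvd_iff.1 h d (by lia)]
  congr 1
  ring

end JacobiProduct

section ModThree

local instance : TopologicalSpace (ZMod 3) := ⊥

local instance : DiscreteTopology (ZMod 3) := ⟨rfl⟩

local notation "θ" => formalTheta (R := ZMod 3)

local notation "U₃" => atkinU (R := ZMod 3) 3

theorem mk_Rbar_two_three_mul_formalTheta :
    (mk fun n ↦ (Rbar 2 3 n : ZMod 3)) * θ 1 1 = θ (-1) 1 := by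
  have hR := mk_Rbar_mul_distinctPartsSeries (R := ZMod 3) 2 3
  have hθ := formalTheta_mul_distinctPartsSeries (1 : (ZMod 3)ˣ) (-1)
  simp only [inv_one, inv_neg, Units.val_one, Units.val_neg] at hθ
  have hN₁ := distinctPartsSeries_not_dvd_mul_pow (p := 3) (P := (¬ 2 ∣ ·)) (fun i ↦ by lia) 1
  have hN₂ := distinctPartsSeries_not_dvd_mul_pow (p := 3) (P := (¬ 2 ∣ ·)) (fun i ↦ by lia) (-1)
  set G : (ZMod 3)⟦X⟧ := mk fun n ↦ (Rbar 2 3 n : ZMod 3)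
  set D : ZMod 3 → (ZMod 3)⟦X⟧ := distinctPartsSeries fun i ↦ ¬ 2 ∣ i ∧ ¬ 3 ∣ i
  set N : ZMod 3 → (ZMod 3)⟦X⟧ := distinctPartsSeries (¬ 2 ∣ ·)
  calc
    G * θ 1 1 = G * D (-1) * (θ 1 1 * N (-1) ^ 2) := by linear_combination -G * θ 1 1 * hN₂
    _ = D 1 * N 1 ^ 2 * θ (-1) 1 := by rw [hR]; linear_combination -D 1 * hθ
    _ = θ (-1) 1 := by rw [hN₁, one_mul]

theorem atkinU_three_formalTheta_one : U₃ (θ 1 1) = θ 1 1 ^ 3 := by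
  rw [atkinU_three_formalTheta (by decide), one_pow, formalTheta_pow_prime]

theorem atkinU_three_formalTheta_neg_one : U₃ (θ (-1) 1) = θ (-1) 1 ^ 3 := by
  rw [atkinU_three_formalTheta (by decide), formalTheta_pow_prime, Odd.neg_one_pow (by decide)]

theorem atkinU_three_mk_Rbar :
    U₃ (mk fun n ↦ (Rbar 2 3 n : ZMod 3)) = θ (-1) 1 ^ 3 * θ 1 1 := by
  set G : (ZMod 3)⟦X⟧ := mk fun n ↦ (Rbar 2 3 n : ZMod 3)
  have hG : G * θ 1 1 = θ (-1) 1 := mk_Rbar_two_three_mul_formalTheta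
  have hprod : θ 1 1 * θ (-1) 1 = θ (-1) 2 ^ 2 := formalTheta_one_mul_formalTheta_neg_one 1
  have hHecke : U₃ (θ 1 1 * θ (-1) 2 ^ 2) = θ (-1) 1 * θ (-1) 2 ^ 4 := by
    have h3 : (3 : (ZMod 3)⟦X⟧) = 0 := by
      rw [← map_ofNat C 3, show (OfNat.ofNat 3 : ZMod 3) = 0 from rfl, map_zero]
    have h6 : θ ((-1) ^ 3) 6 = θ (-1) 2 ^ 3 := by
      rw [formalTheta_pow_prime, Odd.neg_one_pow (by decide)]
    have h := atkinU_three_formalTheta_one_mul_formalTheta_sq (-1 : (ZMod 3)ˣ)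
    rw [h6] at h
    linear_combination h + (θ (-1) 1 * θ (-1) 2 ^ 4 - θ 1 3 * (θ (-1) 2 ^ 3) ^ 2) * h3
  refine mul_left_cancel₀ (formalTheta_ne_zero 1 1) ?_
  calc
    θ 1 1 * U₃ G = U₃ (θ 1 1 ^ 3 * G) := (atkinU_pow_mul _ _).symm
    _ = U₃ (θ 1 1 * θ (-1) 2 ^ 2) := by
      congr 1
      linear_combination θ 1 1 ^ 2 * hG + θ 1 1 * hprod
    _ = θ 1 1 * (θ (-1) 1 ^ 3 * θ 1 1) := by
      rw [hHecke]
      linear_combination -θ (-1) 1 * (θ 1 1 * θ (-1) 1 + θ (-1) 2 ^ 2) * hprod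

theorem atkinU_three_thrice_mk_Rbar :
    U₃ (U₃ (U₃ (mk fun n ↦ (Rbar 2 3 n : ZMod 3)))) = U₃ (mk fun n ↦ (Rbar 2 3 n : ZMod 3)) := by
  rw [atkinU_three_mk_Rbar, atkinU_pow_mul, atkinU_three_formalTheta_one, mul_comm, atkinU_pow_mul,
    atkinU_three_formalTheta_neg_one, mul_comm]

end ModThree

theorem Rbar_two_three_27n_congr_3n (n : ℕ) :
    Rbar 2 3 (27 * n) ≡ Rbar 2 3 (3 * n) [MOD 3] := by
  rw [← ZMod.natCast_eq_natCast_iff]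
  have h := congrArg (coeff n) atkinU_three_thrice_mk_Rbar
  simp only [coeff_atkinU, coeff_mk] at h
  convert h using 3
  ring
end

section
/- For all integers n ≥ 0, the number of (4,9)-regular overpartitions satisfies R̄_{4,9}(18n+12) ≡ 0 (mod 96). -/
/-!
Gauss' identity `∏ (1 - q ^ i) / (1 + q ^ i) = φ(-q)` turns the generating function `G` of the
`(4, 9)`-regular overpartitions into `G * φ(-q) * φ(-q ^ 36) = φ(-q ^ 4) * φ(-q ^ 9)`.

Modulo `3` the Frobenius gives `φ(-q ^ 9) = φ(-q) ^ 9`, hence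
`G * φ(-q ^ 36) = φ(-q ^ 4) * φ(-q) ^ 8`. The identities `φ(q) * φ(-q) = φ(-q ^ 2) ^ 2` and
`φ(q) ^ 2 + φ(-q) ^ 2 = 2 * φ(q ^ 2) ^ 2` make `φ(q) ^ 4 + φ(-q) ^ 4` invariant under `q ↦ q ^ 2`,
hence constant. They express the even part of the right-hand side, and then the terms of that part
with exponent divisible by `6`, through theta functions whose exponents avoid the class of `12`
modulo `18`, because `3` is not a square modulo `9` and `2` is not a square modulo `3`.

Modulo `32` one isolates the exponents divisible by `3` by means of the `3`-dissection
`φ(-q) = φ(-q ^ 9) - 2 * w`. The result is `1 + 8 * K`. For `S = ∑ q ^ (k ^ 2)` over the positive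
odd `k`, the `3`-dissection of `S ^ 2 = φ(q ^ 8) * S(q ^ 2)` and `f(q ^ 2) = f ^ 2` modulo `2` show
that `4` divides the even part of `K`.
-/

open PowerSeries

section Dilation

variable {R : Type*} [CommRing R]

/-- The substitution `q ↦ q ^ k` on power series in `q`. -/
noncomputable abbrev dilate (k : ℕ) [NeZero k] : R⟦X⟧ →ₐ[R] R⟦X⟧ :=
  expand k (NeZero.ne k)

theorem dilate_dilate {a b c : ℕ} [NeZero a] [NeZero b] [NeZero c] (h : a * b = c) (f : R⟦X⟧) :
    dilate a (dilate b f) = dilate c f := by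
  subst h
  exact (expand_mul a (NeZero.ne a) b (NeZero.ne b) f).symm

theorem coeff_evalNegHom (n : ℕ) (f : R⟦X⟧) :
    coeff n (evalNegHom f) = (-1) ^ n * coeff n f := by
  simp [evalNegHom]

theorem evalNegHom_dilate_of_even {k : ℕ} [NeZero k] (hk : Even k) (f : R⟦X⟧) :
    evalNegHom (dilate k f) = dilate k f := by
  ext n
  rw [coeff_evalNegHom, coeff_expand]
  split_ifs with h
  · rw [(hk.trans_dvd h).neg_one_pow, one_mul]
  · rw [mul_zero]

theorem evalNegHom_dilate_of_odd {k : ℕ} [NeZero k] (hk : Odd k) (f : R⟦X⟧) :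
    evalNegHom (dilate k f) = dilate k (evalNegHom f) := by
  ext n
  rw [coeff_evalNegHom, coeff_expand, coeff_expand]
  split_ifs with h
  · obtain ⟨j, rfl⟩ := h
    rw [Nat.mul_div_cancel_left _ (Nat.pos_of_neZero k), coeff_evalNegHom, pow_mul, hk.neg_one_pow]
  · rw [mul_zero]

theorem evalNegHom_evalNegHom (f : R⟦X⟧) : evalNegHom (evalNegHom f) = f := by
  ext n
  rw [coeff_evalNegHom, coeff_evalNegHom, ← mul_assoc, ← mul_pow, neg_one_mul, neg_neg, one_pow,
    one_mul]

end Dilation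

section SquareSeries

variable {R : Type*} [CommRing R]

/-- The power series `∑ k, c k * q ^ (k ^ 2)`, as a linear function of the sequence `c`. -/
noncomputable def squareSeries : (ℕ → R) →ₗ[R] R⟦X⟧ where
  toFun c := .mk fun n ↦ if IsSquare n then c n.sqrt else 0
  map_add' c d := by
    ext n
    simp only [coeff_mk, map_add, Pi.add_apply]
    split_ifs <;> simp
  map_smul' a c := by
    ext n
    simp [mul_ite]

theorem coeff_squareSeries (c : ℕ → R) (n : ℕ) :
    coeff n (squareSeries c) = if IsSquare n then c n.sqrt else 0 := by
  simp [squareSeries]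

theorem coeff_mul_self_squareSeries (c : ℕ → R) (k : ℕ) :
    coeff (k * k) (squareSeries c) = c k := by
  rw [coeff_squareSeries, if_pos ⟨k, rfl⟩, Nat.sqrt_eq]

theorem coeff_squareSeries_of_not_isSquare (c : ℕ → R) {n : ℕ} (hn : ¬ IsSquare n) :
    coeff n (squareSeries c) = 0 := by
  rw [coeff_squareSeries, if_neg hn]

theorem eq_squareSeries {f : R⟦X⟧} {c : ℕ → R} (h : ∀ k, coeff (k * k) f = c k)
    (h' : ∀ n, ¬ IsSquare n → coeff n f = 0) : f = squareSeries c := by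
  ext n
  by_cases hn : IsSquare n
  · obtain ⟨k, rfl⟩ := hn
    rw [h, coeff_mul_self_squareSeries]
  · rw [h' n hn, coeff_squareSeries_of_not_isSquare c hn]

theorem dilate_squareSeries {m k : ℕ} [NeZero k] (h : m * m = k) (c : ℕ → R) :
    dilate k (squareSeries c) = squareSeries fun i ↦ if m ∣ i then c (i / m) else 0 := by
  subst h
  have hm : 0 < m * m := Nat.pos_of_neZero _
  refine eq_squareSeries (fun i ↦ ?_) fun n hn ↦ ?_
  · rw [coeff_expand]
    by_cases hi : m ∣ i
    · obtain ⟨j, rfl⟩ := hi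
      rw [if_pos (dvd_mul_right m j), Nat.mul_div_cancel_left _ (Nat.pos_of_mul_pos_left hm),
        mul_mul_mul_comm, if_pos (dvd_mul_right _ _), Nat.mul_div_cancel_left _ hm,
        coeff_mul_self_squareSeries]
    · rw [if_neg hi, if_neg (by rwa [← sq, ← sq, Nat.pow_dvd_pow_iff two_ne_zero])]
  · rw [coeff_expand]
    split_ifs with hdvd
    · obtain ⟨j, rfl⟩ := hdvd
      rw [Nat.mul_div_cancel_left _ hm]
      refine coeff_squareSeries_of_not_isSquare c fun hj ↦ hn ?_
      exact (IsSquare.mul_self m).mul hj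
    · rfl

theorem evalNegHom_squareSeries (c : ℕ → R) :
    evalNegHom (squareSeries c) = squareSeries fun k ↦ (-1) ^ k * c k := by
  refine eq_squareSeries (fun k ↦ ?_) fun n hn ↦ ?_
  · rw [coeff_evalNegHom, coeff_mul_self_squareSeries]
    rcases k.even_or_odd with hk | hk
    · rw [(hk.mul_left k).neg_one_pow, hk.neg_one_pow]
    · rw [(hk.mul hk).neg_one_pow, hk.neg_one_pow]
  · rw [coeff_evalNegHom, coeff_squareSeries_of_not_isSquare c hn, mul_zero]

theorem evalNegHom_squareSeries_of_odd {c : ℕ → R} (hc : ∀ k, Even k → c k = 0) :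
    evalNegHom (squareSeries c) = -squareSeries c := by
  rw [evalNegHom_squareSeries, ← map_neg]
  congr 1
  ext k
  rcases k.even_or_odd with hk | hk
  · rw [Pi.neg_apply, hc k hk, mul_zero, neg_zero]
  · rw [Pi.neg_apply, hk.neg_one_pow, neg_one_mul]

end SquareSeries

section ResidueClasses

variable {R : Type*} [CommRing R] {m : ℕ}

/-- The power series all of whose exponents lie in the residue class `r` modulo `m`. -/
def supportedMod (r : ZMod m) : Submodule R R⟦X⟧ where
  carrier := {f | ∀ n : ℕ, (n : ZMod m) ≠ r → coeff n f = 0}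
  add_mem' hf hg n hn := by rw [map_add, hf n hn, hg n hn, add_zero]
  zero_mem' _ _ := map_zero _
  smul_mem' a f hf n hn := by rw [map_smul, hf n hn, smul_zero]

instance : SetLike.GradedMonoid (supportedMod : ZMod m → Submodule R R⟦X⟧) where
  one_mem n hn := by
    rw [coeff_one, if_neg]
    rintro rfl
    exact hn Nat.cast_zero
  mul_mem r s f g hf hg n hn := by
    rw [coeff_mul]
    refine Finset.sum_eq_zero fun ij hij ↦ ?_
    rw [Finset.HasAntidiagonal.mem_antidiagonal] at hij
    by_cases hi : (ij.1 : ZMod m) = r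
    · rw [hg ij.2, mul_zero]
      rintro rfl
      exact hn (by rw [← hij, Nat.cast_add, hi])
    · rw [hf _ hi, zero_mul]

theorem mul_mem_supportedMod {r s t : ZMod m} {f g : R⟦X⟧} (hf : f ∈ supportedMod r)
    (hg : g ∈ supportedMod s) (h : r + s = t) : f * g ∈ supportedMod t :=
  h ▸ SetLike.mul_mem_graded hf hg

theorem dilate_mem_supportedMod {k : ℕ} [NeZero k] {r s : ZMod m} {f : R⟦X⟧}
    (hf : f ∈ supportedMod r) (h : (k : ZMod m) * r = s) : dilate k f ∈ supportedMod s := by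
  intro n hn
  rw [coeff_expand]
  split_ifs with hdvd
  · obtain ⟨j, rfl⟩ := hdvd
    rw [Nat.mul_div_cancel_left _ (Nat.pos_of_neZero k)]
    refine hf j ?_
    rintro rfl
    exact hn (by rw [Nat.cast_mul, h])
  · rfl

theorem dilate_mem_supportedMod_zero {k : ℕ} [NeZero k] (hk : m ∣ k) (f : R⟦X⟧) :
    dilate k f ∈ supportedMod (0 : ZMod m) := by
  intro n hn
  refine coeff_expand_of_not_dvd k (NeZero.ne k) _ fun h ↦ hn ?_
  exact (ZMod.natCast_eq_zero_iff n m).2 (hk.trans h)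

theorem squareSeries_mem_supportedMod {r : ZMod m} {c : ℕ → R}
    (hc : ∀ k : ℕ, c k ≠ 0 → (k : ZMod m) * k = r) : squareSeries c ∈ supportedMod r := by
  intro n hn
  by_cases hsq : IsSquare n
  · obtain ⟨k, rfl⟩ := hsq
    rw [coeff_mul_self_squareSeries]
    by_contra hk
    exact hn (by rw [Nat.cast_mul, hc k hk])
  · exact coeff_squareSeries_of_not_isSquare c hsq

/-- The part of a power series with exponents in the residue class `r` modulo `m`. -/
noncomputable def residuePart (r : ZMod m) : R⟦X⟧ →ₗ[R] R⟦X⟧ where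
  toFun f := .mk fun n ↦ if (n : ZMod m) = r then coeff n f else 0
  map_add' f g := by
    ext n
    simp only [coeff_mk, map_add]
    split_ifs <;> simp
  map_smul' a f := by
    ext n
    simp [mul_ite]

theorem coeff_residuePart (r : ZMod m) (f : R⟦X⟧) (n : ℕ) :
    coeff n (residuePart r f) = if (n : ZMod m) = r then coeff n f else 0 := by
  simp [residuePart]

theorem coeff_residuePart_of_eq {r : ZMod m} {n : ℕ} (hn : (n : ZMod m) = r) (f : R⟦X⟧) :
    coeff n (residuePart r f) = coeff n f := by
  rw [coeff_residuePart, if_pos hn]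

theorem residuePart_of_mem {r : ZMod m} {f : R⟦X⟧} (hf : f ∈ supportedMod r) :
    residuePart r f = f := by
  ext n
  rw [coeff_residuePart]
  split_ifs with h
  · rfl
  · exact (hf n h).symm

theorem residuePart_of_mem_of_ne {r s : ZMod m} {f : R⟦X⟧} (hf : f ∈ supportedMod s) (h : s ≠ r) :
    residuePart r f = 0 := by
  ext n
  rw [coeff_residuePart, map_zero, ite_eq_right_iff]
  rintro rfl
  exact hf n h.symm

theorem residuePart_mul_of_mem_zero (r : ZMod m) (f : R⟦X⟧) {g : R⟦X⟧}
    (hg : g ∈ supportedMod (0 : ZMod m)) : residuePart r (f * g) = residuePart r f * g := by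
  ext n
  rw [coeff_residuePart, coeff_mul, coeff_mul, Finset.ite_sum_zero]
  refine Finset.sum_congr rfl fun ij hij ↦ ?_
  rw [Finset.HasAntidiagonal.mem_antidiagonal] at hij
  by_cases hj : (ij.2 : ZMod m) = 0
  · rw [coeff_residuePart, ite_zero_mul, ← hij, Nat.cast_add, hj, add_zero]
  · rw [hg _ hj, mul_zero, mul_zero, ite_self]

theorem residuePart_dilate_squareSeries {k : ℕ} [NeZero k] {r : ZMod m}
    (hr : ∀ a : ZMod m, (k : ZMod m) * (a * a) ≠ r) (c : ℕ → R) :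
    residuePart r (dilate k (squareSeries c)) = 0 := by
  ext n
  rw [coeff_residuePart, map_zero, ite_eq_right_iff]
  rintro rfl
  rw [coeff_expand]
  split_ifs with h
  · obtain ⟨j, rfl⟩ := h
    rw [Nat.mul_div_cancel_left _ (Nat.pos_of_neZero k)]
    refine coeff_squareSeries_of_not_isSquare c ?_
    rintro ⟨a, rfl⟩
    exact hr a (by push_cast; rfl)
  · rfl

end ResidueClasses

section Trisection

variable {R : Type*} [CommRing R]

theorem residuePart_one_add_sq {x₀ x₁ : R⟦X⟧} (hx₀ : x₀ ∈ supportedMod (0 : ZMod 3))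
    (hx₁ : x₁ ∈ supportedMod (1 : ZMod 3)) :
    residuePart (1 : ZMod 3) ((x₀ + x₁) ^ 2) = 2 * (x₁ * x₀) := by
  have hx₁₁ : x₁ * x₁ ∈ supportedMod (2 : ZMod 3) := mul_mem_supportedMod hx₁ hx₁ rfl
  rw [show (x₀ + x₁) ^ 2 = x₀ * x₀ + x₁ * x₀ + x₁ * x₀ + x₁ * x₁ by ring]
  simp only [map_add, residuePart_mul_of_mem_zero _ _ hx₀, residuePart_of_mem hx₁,
    residuePart_of_mem_of_ne hx₀ (show (0 : ZMod 3) ≠ 1 by decide),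
    residuePart_of_mem_of_ne hx₁₁ (show (2 : ZMod 3) ≠ 1 by decide)]
  ring

theorem residuePart_one_add_mul_add {x₀ x₂ y₀ y₂ : R⟦X⟧} (hx₀ : x₀ ∈ supportedMod (0 : ZMod 3))
    (hx₂ : x₂ ∈ supportedMod (2 : ZMod 3)) (hy₀ : y₀ ∈ supportedMod (0 : ZMod 3))
    (hy₂ : y₂ ∈ supportedMod (2 : ZMod 3)) :
    residuePart (1 : ZMod 3) ((x₀ + x₂) * (y₀ + y₂)) = x₂ * y₂ := by
  have hx₂y₂ : x₂ * y₂ ∈ supportedMod (1 : ZMod 3) := mul_mem_supportedMod hx₂ hy₂ rfl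
  rw [show (x₀ + x₂) * (y₀ + y₂) = x₀ * y₀ + y₂ * x₀ + x₂ * y₀ + x₂ * y₂ by ring]
  simp only [map_add, residuePart_mul_of_mem_zero _ _ hx₀, residuePart_mul_of_mem_zero _ _ hy₀,
    residuePart_of_mem hx₂y₂, residuePart_of_mem_of_ne hx₀ (show (0 : ZMod 3) ≠ 1 by decide),
    residuePart_of_mem_of_ne hx₂ (show (2 : ZMod 3) ≠ 1 by decide),
    residuePart_of_mem_of_ne hy₂ (show (2 : ZMod 3) ≠ 1 by decide), zero_mul, zero_add]

theorem residuePart_zero_add_mul_add_sq {u₀ u₂ x₀ x₁ : R⟦X⟧}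
    (hu₀ : u₀ ∈ supportedMod (0 : ZMod 3)) (hu₂ : u₂ ∈ supportedMod (2 : ZMod 3))
    (hx₀ : x₀ ∈ supportedMod (0 : ZMod 3)) (hx₁ : x₁ ∈ supportedMod (1 : ZMod 3)) :
    residuePart (0 : ZMod 3) ((u₀ + u₂) * (x₀ + x₁) ^ 2) = u₀ * x₀ ^ 2 + 2 * (u₂ * x₁ * x₀) := by
  have hx₁₁ : x₁ * x₁ ∈ supportedMod (2 : ZMod 3) := mul_mem_supportedMod hx₁ hx₁ rfl
  have hu₂x₁ : u₂ * x₁ ∈ supportedMod (0 : ZMod 3) := mul_mem_supportedMod hu₂ hx₁ rfl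
  have hu₀x₁ : u₀ * x₁ ∈ supportedMod (1 : ZMod 3) := mul_mem_supportedMod hu₀ hx₁ rfl
  have h₁ : u₂ * (x₁ * x₁) ∈ supportedMod (1 : ZMod 3) := mul_mem_supportedMod hu₂ hx₁₁ rfl
  have h₂ : u₀ * (x₁ * x₁) ∈ supportedMod (2 : ZMod 3) := mul_mem_supportedMod hu₀ hx₁₁ rfl
  rw [show (u₀ + u₂) * (x₀ + x₁) ^ 2 = u₀ * x₀ * x₀ + u₂ * x₁ * x₀ + u₂ * x₁ * x₀
      + (u₂ * (x₁ * x₁) + u₀ * x₁ * x₀ + u₀ * x₁ * x₀ + u₀ * (x₁ * x₁) + u₂ * x₀ * x₀) by ring]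
  simp only [map_add, residuePart_mul_of_mem_zero _ _ hx₀, residuePart_of_mem hu₀,
    residuePart_of_mem hu₂x₁, residuePart_of_mem_of_ne h₁ (show (1 : ZMod 3) ≠ 0 by decide),
    residuePart_of_mem_of_ne hu₀x₁ (show (1 : ZMod 3) ≠ 0 by decide),
    residuePart_of_mem_of_ne h₂ (show (2 : ZMod 3) ≠ 0 by decide),
    residuePart_of_mem_of_ne hu₂ (show (2 : ZMod 3) ≠ 0 by decide)]
  ring

theorem residuePart_zero_mul_sub {A B w w' : R⟦X⟧}
    (hA : A ∈ supportedMod (0 : ZMod 3)) (hB : B ∈ supportedMod (0 : ZMod 3))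
    (hw : w ∈ supportedMod (1 : ZMod 3)) (hw' : w' ∈ supportedMod (1 : ZMod 3)) :
    residuePart (0 : ZMod 3) (A * (A ^ 2 + 2 * A * w + 4 * w ^ 2) * (B - 2 * w')) =
      A ^ 3 * B - 8 * (w ^ 2 * w' * A) := by
  have hww : w * w ∈ supportedMod (2 : ZMod 3) := mul_mem_supportedMod hw hw rfl
  have hww' : w * w' ∈ supportedMod (2 : ZMod 3) := mul_mem_supportedMod hw hw' rfl
  have hwww' : w * w * w' ∈ supportedMod (0 : ZMod 3) := mul_mem_supportedMod hww hw' rfl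
  rw [show A * (A ^ 2 + 2 * A * w + 4 * w ^ 2) * (B - 2 * w') =
    A * A * A * B + (2 : ℕ) • (w * A * A * B) + (4 : ℕ) • (w * w * A * B)
      - (2 : ℕ) • (w' * A * A * A) - (4 : ℕ) • (w * w' * A * A) - (8 : ℕ) • (w * w * w' * A) by
    simp only [nsmul_eq_mul]; ring]
  simp only [map_add, map_sub, map_nsmul, residuePart_mul_of_mem_zero _ _ hA,
    residuePart_mul_of_mem_zero _ _ hB, residuePart_of_mem hA, residuePart_of_mem hwww',
    residuePart_of_mem_of_ne hw (show (1 : ZMod 3) ≠ 0 by decide),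
    residuePart_of_mem_of_ne hw' (show (1 : ZMod 3) ≠ 0 by decide),
    residuePart_of_mem_of_ne hww (show (2 : ZMod 3) ≠ 0 by decide),
    residuePart_of_mem_of_ne hww' (show (2 : ZMod 3) ≠ 0 by decide)]
  simp only [nsmul_eq_mul]
  ring

end Trisection

section Theta

variable {R : Type*} [CommRing R]

/-- Ramanujan's theta function `φ(q) = ∑ q ^ (k ^ 2)`, the sum being over all integers `k`. -/
noncomputable def theta : R⟦X⟧ := squareSeries fun k ↦ if k = 0 then 1 else 2

/-- The series `φ(-q) = ∑ (-1) ^ k * q ^ (k ^ 2)`, the sum being over all integers `k`. -/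
noncomputable def altTheta : R⟦X⟧ := squareSeries fun k ↦ if k = 0 then 1 else 2 * (-1) ^ k

end Theta

section FiniteGaussIdentity

variable {A : Type*} [CommRing A]

/-- The `k`-th summand of the finite form of Gauss' identity `∏ (1 - q ^ i) = φ(-q) ∏ (1 + q ^ i)`
that involves the factors with `i ≤ n` only. -/
def gaussTerm (q : A) (n k : ℕ) : A :=
  (-1) ^ k * (∏ i ∈ Finset.Ico k n, (1 - q ^ (i + 1))) * (∏ i ∈ Finset.range k, (1 + q ^ i)) *
    q ^ ((n + 1) * k)

theorem gaussTerm_succ_left (q : A) {n k : ℕ} (hk : k ≤ n) :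
    gaussTerm q (n + 1) k = gaussTerm q n k * (1 - q ^ (n + 1)) * q ^ k := by
  rw [gaussTerm, gaussTerm, Finset.prod_Ico_succ_top hk, add_mul (n + 1), one_mul, pow_add q]
  ring

theorem gaussTerm_succ_right (q : A) {n k : ℕ} (hk : k < n) :
    gaussTerm q n (k + 1) * (1 - q ^ (k + 1)) = -(gaussTerm q n k * (1 + q ^ k) * q ^ (n + 1)) := by
  rw [gaussTerm, gaussTerm, Finset.prod_eq_prod_Ico_succ_bot hk, Finset.prod_range_succ,
    mul_add_one (n + 1), pow_add q ((n + 1) * k)]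
  ring

theorem sum_gaussTerm_succ_sub (q : A) {n m : ℕ} (hm : m ≤ n) :
    ∑ k ∈ Finset.range (m + 1), (gaussTerm q (n + 1) k - (1 + q ^ (n + 1)) * gaussTerm q n k) =
      -(gaussTerm q n m * (1 + q ^ m) * q ^ (n + 1)) := by
  induction m with
  | zero =>
    rw [Finset.sum_range_one, gaussTerm_succ_left q (Nat.zero_le n)]
    ring
  | succ m ih =>
    rw [Finset.sum_range_succ, ih (by omega), ← gaussTerm_succ_right q (by omega),
      gaussTerm_succ_left q hm]
    ring

theorem gaussTerm_succ_self_sub (q : A) (n : ℕ) :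
    gaussTerm q (n + 1) (n + 1) - gaussTerm q n n * (1 + q ^ n) * q ^ (n + 1) =
      2 * (-1) ^ (n + 1) * (∏ i ∈ Finset.range (n + 1), (1 + q ^ (i + 1))) * q ^ (n + 1) ^ 2 := by
  have hprod : (∏ i ∈ Finset.range (n + 1), (1 + q ^ i)) * (1 + q ^ (n + 1)) =
      2 * ∏ i ∈ Finset.range (n + 1), (1 + q ^ (i + 1)) := by
    rw [← Finset.prod_range_succ (fun i ↦ 1 + q ^ i), Finset.prod_range_succ', pow_zero,
      one_add_one_eq_two, mul_comm]
  rw [gaussTerm, gaussTerm, Finset.Ico_self, Finset.Ico_self, Finset.prod_empty]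
  rw [Finset.prod_range_succ _ n] at hprod ⊢
  linear_combination ((-1) ^ (n + 1) * q ^ (n + 1) ^ 2) * hprod

theorem sum_gaussTerm (q : A) (n : ℕ) :
    ∑ k ∈ Finset.range (n + 1), gaussTerm q n k =
      (∏ i ∈ Finset.range n, (1 + q ^ (i + 1))) *
        ∑ k ∈ Finset.range (n + 1), (if k = 0 then 1 else 2 * (-1) ^ k) * q ^ k ^ 2 := by
  induction n with
  | zero => simp [gaussTerm]
  | succ n ih =>
    have hsub := sum_gaussTerm_succ_sub q le_rfl (n := n)
    have hself := gaussTerm_succ_self_sub q n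
    rw [Finset.sum_sub_distrib, ← Finset.mul_sum, ih] at hsub
    rw [Finset.sum_range_succ _ (n + 1), Finset.sum_range_succ _ (n + 1), mul_add,
      if_neg n.succ_ne_zero]
    rw [Finset.prod_range_succ] at hself ⊢
    linear_combination hsub + hself

end FiniteGaussIdentity

section Products

open scoped PowerSeries.WithPiTopology

variable {R : Type*} [CommRing R] [TopologicalSpace R]

/-- The infinite product of the factors `1 + c * q ^ i` over the positive integers `i` such that
`p i`. -/
noncomputable def partProduct (c : R) (p : ℕ → Prop) [DecidablePred p] : R⟦X⟧ :=
  ∏' n : ℕ, if p (n + 1) then 1 + C c * X ^ (n + 1) else 1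

theorem hasProd_partProduct (c : R) (p : ℕ → Prop) [DecidablePred p] :
    HasProd (fun n : ℕ ↦ if p (n + 1) then 1 + C c * X ^ (n + 1) else 1) (partProduct c p) := by
  suffices Multipliable fun n : ℕ ↦ 1 + if p (n + 1) then C c * X ^ (n + 1) else 0 by
    simp_rw [add_ite, add_zero] at this
    exact this.hasProd
  apply WithPiTopology.multipliable_one_add_of_tendsto_order_atTop_nhds_top
  refine ENat.tendsto_nhds_top_iff_natCast_lt.2 fun n ↦ Filter.eventually_atTop.2 ⟨n, fun m hm ↦ ?_⟩
  refine lt_of_lt_of_le (Nat.cast_lt.2 (Nat.lt_succ_of_le hm)) (nat_le_order _ _ fun i hi ↦ ?_)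
  split_ifs
  · rw [coeff_C_mul, coeff_X_pow, if_neg hi.ne, mul_zero]
  · exact map_zero _

theorem continuous_dilate (k : ℕ) [NeZero k] : Continuous (dilate k : R⟦X⟧ →ₐ[R] R⟦X⟧) := by
  refine continuous_iff_continuousAt.2 fun f ↦ ?_
  rw [ContinuousAt, WithPiTopology.tendsto_iff_coeff_tendsto]
  intro d
  simp_rw [coeff_expand]
  split_ifs
  · exact (WithPiTopology.continuous_coeff R (d / k)).continuousAt
  · exact tendsto_const_nhds

theorem tendsto_sum_squareSeries (c : ℕ → R) :
    Filter.Tendsto (fun n ↦ ∑ k ∈ Finset.range n, C (c k) * X ^ k ^ 2) Filter.atTop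
      (nhds (squareSeries c)) := by
  rw [WithPiTopology.tendsto_iff_coeff_tendsto]
  refine fun d ↦ tendsto_const_nhds.congr' ?_
  filter_upwards [Filter.eventually_gt_atTop d] with n hn
  simp only [map_sum, coeff_C_mul, coeff_X_pow]
  by_cases hd : IsSquare d
  · obtain ⟨r, rfl⟩ := hd
    rw [coeff_mul_self_squareSeries, Finset.sum_eq_single r]
    · rw [if_pos (sq r).symm, mul_one]
    · intro k _ hk
      rw [if_neg fun h ↦ hk (Nat.mul_self_inj.1 (h.trans (sq k))).symm, mul_zero]
    · exact fun hr ↦ absurd (Finset.mem_range.2 ((Nat.le_mul_self r).trans_lt hn)) hr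
  · rw [coeff_squareSeries_of_not_isSquare c hd]
    refine (Finset.sum_eq_zero fun k _ ↦ ?_).symm
    rw [if_neg fun h ↦ hd ⟨k, h.trans (sq k)⟩, mul_zero]

variable [T2Space R]

theorem constantCoeff_partProduct (c : R) (p : ℕ → Prop) [DecidablePred p] :
    constantCoeff (partProduct c p) = 1 := by
  refine ((hasProd_partProduct c p).map (constantCoeff (R := R))
    (WithPiTopology.continuous_constantCoeff R)).unique ?_
  convert hasProd_one using 2 with n
  simp [apply_ite]

theorem isUnit_partProduct (c : R) (p : ℕ → Prop) [DecidablePred p] :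
    IsUnit (partProduct c p) :=
  isUnit_iff_constantCoeff.2 (constantCoeff_partProduct c p ▸ isUnit_one)

theorem dilate_partProduct (c : R) (k : ℕ) [NeZero k] :
    dilate k (partProduct c fun _ ↦ True) = partProduct c (k ∣ ·) := by
  have hmap := (hasProd_partProduct c fun _ ↦ True).map (dilate k) (continuous_dilate k)
  have hk := Nat.pos_of_neZero k
  have hsub (n : ℕ) : k * (n + 1) - 1 + 1 = k * (n + 1) :=
    Nat.sub_add_cancel (Nat.mul_pos hk n.succ_pos)
  have hinj : Function.Injective fun n ↦ k * (n + 1) - 1 := by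
    intro a b hab
    have : k * (a + 1) = k * (b + 1) := by rw [← hsub a, ← hsub b]; exact congrArg (· + 1) hab
    exact Nat.succ_injective (Nat.eq_of_mul_eq_mul_left hk this)
  refine hmap.unique ?_
  have hprod := hasProd_partProduct c (k ∣ ·)
  rw [← hinj.hasProd_iff] at hprod
  · convert hprod using 1
    ext1 n
    simp only [Function.comp_apply, hsub, dvd_mul_right, if_true, map_add, map_mul, map_one,
      map_pow, expand_C, expand_X, ← pow_mul]
  · intro n hn
    refine if_neg ?_
    rintro ⟨j, hj⟩
    obtain ⟨i, rfl⟩ := Nat.exists_eq_succ_of_ne_zero (n := j) (by rintro rfl; simp at hj)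
    exact hn ⟨i, Nat.sub_eq_of_eq_add hj.symm⟩

theorem partProduct_not_and_not_mul [IsTopologicalSemiring R] (c : R) (p p' : ℕ → Prop)
    [DecidablePred p] [DecidablePred p'] :
    (partProduct c fun i ↦ ¬ p i ∧ ¬ p' i) * partProduct c p * partProduct c p' =
      (partProduct c fun _ ↦ True) * partProduct c fun i ↦ p i ∧ p' i := by
  refine (((hasProd_partProduct c fun i ↦ ¬ p i ∧ ¬ p' i).mul (hasProd_partProduct c p)).mul
    (hasProd_partProduct c p')).unique ?_
  convert (hasProd_partProduct c fun _ ↦ True).mul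
    (hasProd_partProduct c fun i ↦ p i ∧ p' i) using 2 with n
  by_cases hp : p (n + 1) <;> by_cases hp' : p' (n + 1) <;> simp [hp, hp']

theorem partProduct_one_mul_altTheta [IsTopologicalSemiring R] :
    (partProduct (1 : R) fun _ ↦ True) * altTheta = partProduct (-1) fun _ ↦ True := by
  have hplus := (hasProd_partProduct (1 : R) fun _ ↦ True).tendsto_prod_nat
  have hminus := (hasProd_partProduct (-1 : R) fun _ ↦ True).tendsto_prod_nat
  have htheta := (Filter.tendsto_add_atTop_iff_nat 1).2
    (tendsto_sum_squareSeries fun k ↦ if k = 0 then (1 : R) else 2 * (-1) ^ k)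
  refine tendsto_nhds_unique (hplus.mul htheta) ?_
  rw [WithPiTopology.tendsto_iff_coeff_tendsto] at hminus ⊢
  refine fun d ↦ (hminus d).congr' ?_
  filter_upwards [Filter.eventually_ge_atTop d] with n hn
  have hgauss := sum_gaussTerm (X : R⟦X⟧) n
  have htail : coeff d (∑ k ∈ Finset.range n, gaussTerm (X : R⟦X⟧) n (k + 1)) = 0 := by
    rw [map_sum]
    refine Finset.sum_eq_zero fun k _ ↦ ?_
    rw [gaussTerm, coeff_mul_X_pow', if_neg (by nlinarith)]
  rw [Finset.sum_range_succ'] at hgauss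
  have hcoeff := congrArg (coeff d) hgauss
  rw [map_add, htail, zero_add] at hcoeff
  simpa [gaussTerm, sub_eq_add_neg, apply_ite C, map_ofNat (C : R →+* R⟦X⟧)] using hcoeff

end Products

section GeneratingFunction

open scoped PowerSeries.WithPiTopology

theorem mk_card_restricted_mul_partProduct {R : Type*} [CommRing R] [TopologicalSpace R]
    [T2Space R] [IsTopologicalRing R] (p : ℕ → Prop) [DecidablePred p] :
    (PowerSeries.mk fun n ↦ (Fintype.card {x : n.Partition // ∀ i ∈ x.parts, p i} : R)) *
      partProduct (-1) p = 1 := by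
  have hcard (n : ℕ) : Fintype.card {x : n.Partition // ∀ i ∈ x.parts, p i} =
      (Nat.Partition.restricted n p).card := Fintype.card_subtype _
  simp_rw [hcard]
  refine ((Nat.Partition.hasProd_powerSeriesMk_card_restricted R p).mul
    (hasProd_partProduct (-1) p)).unique ?_
  convert hasProd_one using 2 with n
  split_ifs
  · have hgeom := WithPiTopology.tsum_pow_mul_one_sub_of_constantCoeff_eq_zero
      (f := (X : R⟦X⟧) ^ (n + 1)) (by simp)
    simp_rw [← pow_mul] at hgeom
    rwa [map_neg, map_one, neg_one_mul, ← sub_eq_add_neg]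
  · exact one_mul 1

theorem mk_card_nodup_eq_partProduct {R : Type*} [CommRing R] [TopologicalSpace R]
    [T2Space R] (p : ℕ → Prop) [DecidablePred p] :
    (PowerSeries.mk fun n ↦
      (Fintype.card {x : n.Partition // x.parts.Nodup ∧ ∀ i ∈ x.parts, p i} : R)) =
      partProduct 1 p := by
  have hgenFun : (PowerSeries.mk fun n ↦
      (Fintype.card {x : n.Partition // x.parts.Nodup ∧ ∀ i ∈ x.parts, p i} : R)) =
      Nat.Partition.genFun fun i c ↦ if p i ∧ c < 2 then (1 : R) else 0 := by
    ext n
    simp_rw [Nat.Partition.genFun, Fintype.card_subtype, Finset.card_filter, Finsupp.prod,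
      Finset.prod_boole, coeff_mk, Nat.cast_sum, Nat.cast_ite, Nat.cast_one, Nat.cast_zero]
    refine Finset.sum_congr rfl fun x _ ↦ if_congr ?_ rfl rfl
    simp only [Multiset.toFinsupp_support, Multiset.mem_toFinset, Multiset.toFinsupp_apply,
      Nat.lt_succ_iff, forall_and, Multiset.nodup_iff_count_le_one]
    rw [and_comm]
    refine and_congr_right' (forall_congr' fun i ↦ ⟨fun h _ ↦ h, fun h ↦ ?_⟩)
    by_cases hi : i ∈ x.parts
    · exact h hi
    · exact (Multiset.count_eq_zero_of_notMem hi).trans_le zero_le_one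
  rw [hgenFun]
  refine (Nat.Partition.hasProd_genFun _).unique ?_
  refine (hasProd_partProduct 1 p).congr_fun fun n ↦ ?_
  rw [tsum_eq_single 0 fun j hj ↦ by rw [if_neg (by omega), zero_smul]]
  by_cases h : p (n + 1) <;> simp [h]

/-- The generating function of the numbers of `(ℓ, μ)`-regular overpartitions. -/
noncomputable def rbarSeries {R : Type*} [CommRing R] (ℓ μ : ℕ) : R⟦X⟧ :=
  .mk fun n ↦ (Rbar ℓ μ n : R)

theorem rbarSeries_mul_partProduct {R : Type*} [CommRing R] [TopologicalSpace R]
    [T2Space R] [IsTopologicalRing R] (ℓ μ : ℕ) :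
    rbarSeries ℓ μ * partProduct (-1 : R) (fun i ↦ ¬ ℓ ∣ i ∧ ¬ μ ∣ i) =
      partProduct 1 fun i ↦ ¬ ℓ ∣ i ∧ ¬ μ ∣ i := by
  have hmul : (rbarSeries ℓ μ : R⟦X⟧) =
      (PowerSeries.mk fun n ↦ (regularCount ℓ μ n : R)) *
        .mk fun n ↦ (regularDistinctCount ℓ μ n : R) := by
    ext n
    simp [rbarSeries, coeff_mul, Rbar]
  rw [hmul, mul_right_comm, ← mk_card_nodup_eq_partProduct]
  exact (congrArg (· * _) (mk_card_restricted_mul_partProduct _)).trans (one_mul _)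

theorem rbarSeries_mul_altTheta {R : Type*} [CommRing R] {ℓ μ k : ℕ} [NeZero ℓ] [NeZero μ]
    [NeZero k] (hk : ℓ.lcm μ = k) :
    rbarSeries ℓ μ * altTheta * dilate k altTheta =
      dilate ℓ altTheta * dilate μ (altTheta : R⟦X⟧) := by
  let _ : TopologicalSpace R := ⊥
  have : DiscreteTopology R := ⟨rfl⟩
  have hgauss := partProduct_one_mul_altTheta (R := R)
  have hlcm (c : R) : (partProduct c fun i ↦ ℓ ∣ i ∧ μ ∣ i) =
      dilate k (partProduct c fun _ ↦ True) := by
    rw [dilate_partProduct]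
    simp only [partProduct, ← hk, Nat.lcm_dvd_iff]
  have hie (c : R) := partProduct_not_and_not_mul c (ℓ ∣ ·) (μ ∣ ·)
  simp_rw [← dilate_partProduct, hlcm] at hie
  have hG := rbarSeries_mul_partProduct (R := R) ℓ μ
  have hplus := hie 1
  have hminus := hie (-1)
  rw [← hgauss] at hminus
  simp only [map_mul] at hminus
  have hunit := isUnit_partProduct (1 : R) fun _ ↦ True
  refine (hunit.mul (hunit.map (dilate k))).mul_left_cancel ?_
  set P := partProduct (1 : R) fun _ ↦ True
  linear_combination (-rbarSeries ℓ μ) * hminus +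
    (dilate ℓ P * dilate ℓ altTheta * dilate μ P * dilate μ altTheta) * hG +
    (dilate ℓ altTheta * dilate μ altTheta) * hplus

end GeneratingFunction

section TwoSquares

/-- The integers whose square is `n`. -/
noncomputable def squareRoots (n : ℕ) : Finset ℤ :=
  (Finset.Icc (-n : ℤ) n).filter fun k ↦ k * k = n

theorem mem_squareRoots {n : ℕ} {k : ℤ} : k ∈ squareRoots n ↔ k * k = n := by
  rw [squareRoots, Finset.mem_filter, Finset.mem_Icc, and_iff_right_iff_imp, ← abs_le]
  intro h
  rw [← h, ← abs_mul_abs_self]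
  nlinarith [abs_nonneg k, Int.le_self_sq |k|]

theorem card_squareRoots_mul_self (r : ℕ) :
    (squareRoots (r * r)).card = if r = 0 then 1 else 2 := by
  have hroots : squareRoots (r * r) = {(r : ℤ), -(r : ℤ)} := by
    ext k
    rw [mem_squareRoots, Nat.cast_mul, mul_self_eq_mul_self_iff, Finset.mem_insert,
      Finset.mem_singleton]
  rw [hroots]
  split_ifs with hr
  · simp [hr]
  · exact Finset.card_pair (by omega)

theorem squareRoots_eq_empty {n : ℕ} (hn : ¬ IsSquare n) : squareRoots n = ∅ := by
  refine Finset.eq_empty_of_forall_notMem fun k hk ↦ hn ⟨k.natAbs, ?_⟩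
  rw [mem_squareRoots, ← Int.natAbs_mul_self' k] at hk
  exact_mod_cast hk.symm

/-- The representations of `n` as an ordered sum of two integer squares. -/
noncomputable def twoSquares (n : ℕ) : Finset (ℤ × ℤ) :=
  (Finset.HasAntidiagonal.antidiagonal n).biUnion fun ij ↦ squareRoots ij.1 ×ˢ squareRoots ij.2

theorem mem_twoSquares {n : ℕ} {p : ℤ × ℤ} : p ∈ twoSquares n ↔ p.1 * p.1 + p.2 * p.2 = n := by
  simp only [twoSquares, Finset.mem_biUnion, Finset.HasAntidiagonal.mem_antidiagonal,
    Finset.mem_product, mem_squareRoots, Prod.exists]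
  constructor
  · rintro ⟨i, j, rfl, hi, hj⟩
    rw [hi, hj, Nat.cast_add]
  · intro h
    refine ⟨p.1.natAbs * p.1.natAbs, p.2.natAbs * p.2.natAbs, ?_, ?_, ?_⟩
    · rw [← Int.natAbs_mul_self' p.1, ← Int.natAbs_mul_self' p.2] at h
      exact_mod_cast h
    all_goals simp

theorem card_twoSquares (n : ℕ) :
    (twoSquares n).card = ∑ ij ∈ Finset.HasAntidiagonal.antidiagonal n,
      (squareRoots ij.1).card * (squareRoots ij.2).card := by
  rw [twoSquares, Finset.card_biUnion]
  · simp_rw [Finset.card_product]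
  · rintro ⟨i, j⟩ _ ⟨i', j'⟩ _ hne
    refine Finset.disjoint_left.2 fun p hp hq ↦ hne ?_
    simp only [Finset.mem_product, mem_squareRoots] at hp hq
    ext
    · exact_mod_cast hp.1.symm.trans hq.1
    · exact_mod_cast hp.2.symm.trans hq.2

/-- The bijection is multiplication by `1 + i` on Gaussian integers. -/
theorem card_twoSquares_two_mul (n : ℕ) : (twoSquares (2 * n)).card = (twoSquares n).card := by
  symm
  refine Finset.card_bij (fun p _ ↦ (p.1 - p.2, p.1 + p.2)) ?_ ?_ ?_
  · intro p hp
    rw [mem_twoSquares] at hp ⊢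
    push_cast
    linear_combination 2 * hp
  · rintro ⟨a, b⟩ _ ⟨c, d⟩ _ h
    simp only [Prod.mk.injEq] at h ⊢
    omega
  · rintro ⟨a, b⟩ hp
    rw [mem_twoSquares, Nat.cast_mul, Nat.cast_ofNat] at hp
    have heven : Even (a + b) := by
      have : Even (a * a + b * b) := hp ▸ even_two_mul _
      rw [Int.even_add, Int.even_mul, Int.even_mul, or_self, or_self] at this
      exact Int.even_add.2 this
    obtain ⟨t, ht⟩ := heven
    obtain rfl : b = t + t - a := by omega
    refine ⟨(t, t - a), mem_twoSquares.2 (by linarith), ?_⟩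
    ext <;> simp only <;> ring

end TwoSquares

section ThetaIdentities

variable {R : Type*} [CommRing R]

theorem coeff_theta (n : ℕ) : coeff n (theta : R⟦X⟧) = (squareRoots n).card := by
  by_cases hn : IsSquare n
  · obtain ⟨r, rfl⟩ := hn
    rw [theta, coeff_mul_self_squareSeries, card_squareRoots_mul_self, Nat.cast_ite, Nat.cast_one,
      Nat.cast_ofNat]
  · rw [theta, coeff_squareSeries_of_not_isSquare _ hn, squareRoots_eq_empty hn, Finset.card_empty,
      Nat.cast_zero]

theorem coeff_theta_sq (n : ℕ) : coeff n (theta ^ 2 : R⟦X⟧) = (twoSquares n).card := by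
  rw [sq, coeff_mul, card_twoSquares, Nat.cast_sum]
  simp_rw [coeff_theta, Nat.cast_mul]

theorem evalNegHom_theta : evalNegHom theta = (altTheta : R⟦X⟧) := by
  rw [theta, altTheta, evalNegHom_squareSeries]
  congr 1
  ext k
  split_ifs with hk
  · rw [hk, pow_zero, one_mul]
  · rw [mul_comm]

theorem altTheta_sq_add_theta_sq :
    altTheta ^ 2 + theta ^ 2 = 2 * (dilate 2 theta ^ 2 : R⟦X⟧) := by
  rw [← evalNegHom_theta, ← map_pow, ← map_pow, two_mul]
  ext n
  rw [map_add, map_add, coeff_evalNegHom]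
  rcases n.even_or_odd' with ⟨m, rfl | rfl⟩
  · rw [coeff_expand_mul, coeff_theta_sq, coeff_theta_sq, card_twoSquares_two_mul,
      (even_two_mul m).neg_one_pow, one_mul]
  · rw [coeff_expand_of_not_dvd 2 two_ne_zero _ (by omega), (odd_two_mul_add_one m).neg_one_pow]
    ring

/-- The series `∑ q ^ (k ^ 2)` over the positive odd integers `k`, which is `q * ψ(q ^ 8)` for
Ramanujan's `ψ`. -/
noncomputable def oddTheta : R⟦X⟧ := squareSeries fun k ↦ if Odd k then 1 else 0

theorem theta_eq_dilate_four_add : theta = dilate 4 theta + 2 * (oddTheta : R⟦X⟧) := by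
  rw [two_mul, oddTheta, theta, dilate_squareSeries (m := 2) rfl, ← map_add, ← map_add]
  congr 1
  ext k
  rcases k.even_or_odd' with ⟨j, rfl | rfl⟩
  · rw [Pi.add_apply, Pi.add_apply, if_pos (dvd_mul_right 2 j), Nat.mul_div_cancel_left j two_pos,
      if_neg (Nat.not_odd_iff_even.2 (even_two_mul j)), add_zero, add_zero]
    exact if_congr (by omega) rfl rfl
  · simp [← two_mul]

theorem evalNegHom_oddTheta : evalNegHom oddTheta = -(oddTheta : R⟦X⟧) :=
  evalNegHom_squareSeries_of_odd fun _ hk ↦ if_neg (Nat.not_odd_iff_even.2 hk)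

theorem altTheta_eq_dilate_four_sub : altTheta = dilate 4 theta - 2 * (oddTheta : R⟦X⟧) := by
  conv_lhs => rw [← evalNegHom_theta, theta_eq_dilate_four_add]
  rw [map_add, map_mul, map_ofNat, evalNegHom_dilate_of_even (by decide), evalNegHom_oddTheta]
  ring

theorem powerSeries_two_ne_zero (h2 : (2 : R) ≠ 0) : (2 : R⟦X⟧) ≠ 0 := by
  rw [← map_ofNat (C : R →+* R⟦X⟧)]
  exact (map_ne_zero_iff _ C_injective).2 h2

variable [NoZeroDivisors R]

theorem altTheta_mul_theta (h2 : (2 : R) ≠ 0) :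
    altTheta * theta = (dilate 2 altTheta ^ 2 : R⟦X⟧) := by
  have hsum : (altTheta + theta : R⟦X⟧) = 2 * dilate 4 theta := by
    conv_lhs => rw [theta_eq_dilate_four_add, altTheta_eq_dilate_four_sub]
    ring
  have hsq := altTheta_sq_add_theta_sq (R := R)
  have hsq' := congrArg (dilate 2) hsq
  simp only [map_add, map_mul, map_pow, map_ofNat, dilate_dilate (show 2 * 2 = 4 from rfl)] at hsq'
  refine mul_left_cancel₀ (powerSeries_two_ne_zero h2) ?_
  linear_combination (altTheta + theta + 2 * dilate 4 theta) * hsum - hsq - 2 * hsq'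

theorem oddTheta_sq (h2 : (2 : R) ≠ 0) :
    oddTheta ^ 2 = (dilate 8 theta * dilate 2 oddTheta : R⟦X⟧) := by
  have hdiff : (theta - altTheta : R⟦X⟧) = 2 * (2 * oddTheta) := by
    conv_lhs => rw [theta_eq_dilate_four_add, altTheta_eq_dilate_four_sub]
    ring
  have hsq := altTheta_sq_add_theta_sq (R := R)
  have hmul := altTheta_mul_theta h2
  have htheta := congrArg (dilate 2) (theta_eq_dilate_four_add (R := R))
  have halt := congrArg (dilate 2) (altTheta_eq_dilate_four_sub (R := R))
  simp only [map_add, map_sub, map_mul, map_ofNat, dilate_dilate (show 2 * 4 = 8 from rfl)]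
    at htheta halt
  have h2' := powerSeries_two_ne_zero h2
  refine mul_left_cancel₀ (pow_ne_zero 4 h2') ?_
  rw [htheta] at hsq
  rw [halt] at hmul
  linear_combination -(theta - altTheta + 4 * oddTheta) * hdiff + hsq - 2 * hmul

end ThetaIdentities

section ThreeDissection

variable {R : Type*} [CommRing R]

/-- The terms `q ^ (k ^ 2)` of `theta` with `k` positive and prime to `3`. -/
noncomputable def thetaCoprimeThree : R⟦X⟧ := squareSeries fun k ↦ if 3 ∣ k then 0 else 1

/-- The terms `q ^ (k ^ 2)` of `oddTheta` with `k` prime to `3`. -/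
noncomputable def oddThetaCoprimeThree : R⟦X⟧ :=
  squareSeries fun k ↦ if Odd k ∧ ¬ 3 ∣ k then 1 else 0

/-- The terms `-(-1) ^ k * q ^ (k ^ 2)` with `k` positive and prime to `3`. The sign makes the
coefficient of `q` positive. -/
noncomputable def altThetaCoprimeThree : R⟦X⟧ :=
  squareSeries fun k ↦ if 3 ∣ k then 0 else -(-1) ^ k

theorem squareSeries_mem_supportedMod_one {c : ℕ → R} (hc : ∀ k, 3 ∣ k → c k = 0) :
    squareSeries c ∈ supportedMod (1 : ZMod 3) := by
  refine squareSeries_mem_supportedMod fun k hk ↦ ?_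
  have hk3 : (k : ZMod 3) ≠ 0 := fun h ↦ hk (hc k ((ZMod.natCast_eq_zero_iff k 3).1 h))
  revert hk3
  generalize (k : ZMod 3) = a
  decide +revert

theorem thetaCoprimeThree_mem : (thetaCoprimeThree : R⟦X⟧) ∈ supportedMod (1 : ZMod 3) :=
  squareSeries_mem_supportedMod_one fun _ hk ↦ if_pos hk

theorem oddThetaCoprimeThree_mem : (oddThetaCoprimeThree : R⟦X⟧) ∈ supportedMod (1 : ZMod 3) :=
  squareSeries_mem_supportedMod_one fun _ hk ↦ if_neg fun h ↦ h.2 hk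

theorem altThetaCoprimeThree_mem : (altThetaCoprimeThree : R⟦X⟧) ∈ supportedMod (1 : ZMod 3) :=
  squareSeries_mem_supportedMod_one fun _ hk ↦ if_pos hk

theorem theta_eq_dilate_nine_add : theta = dilate 9 theta + 2 * (thetaCoprimeThree : R⟦X⟧) := by
  rw [two_mul, thetaCoprimeThree, theta, dilate_squareSeries (m := 3) rfl, ← map_add, ← map_add]
  congr 1
  ext k
  by_cases hk : 3 ∣ k
  · obtain ⟨j, rfl⟩ := hk
    simp
  · have hk0 : k ≠ 0 := by rintro rfl; exact hk (dvd_zero 3)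
    simp [hk, hk0, one_add_one_eq_two]

theorem oddTheta_eq_dilate_nine_add :
    oddTheta = dilate 9 oddTheta + (oddThetaCoprimeThree : R⟦X⟧) := by
  rw [oddThetaCoprimeThree, oddTheta, dilate_squareSeries (m := 3) rfl, ← map_add]
  congr 1
  ext k
  by_cases hk : 3 ∣ k
  · obtain ⟨j, rfl⟩ := hk
    simp [Nat.odd_mul, show Odd 3 by decide]
  · simp [hk]

theorem altTheta_eq_dilate_nine_sub :
    altTheta = dilate 9 altTheta - 2 * (altThetaCoprimeThree : R⟦X⟧) := by
  rw [two_mul, altThetaCoprimeThree, altTheta, dilate_squareSeries (m := 3) rfl, ← map_add,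
    ← map_sub]
  congr 1
  ext k
  by_cases hk : 3 ∣ k
  · obtain ⟨j, rfl⟩ := hk
    simp [pow_mul, show (-1 : R) ^ 3 = -1 by norm_num]
  · have hk0 : k ≠ 0 := by rintro rfl; exact hk (dvd_zero 3)
    simp [hk, hk0, two_mul]

theorem thetaCoprimeThree_eq_add :
    thetaCoprimeThree = oddThetaCoprimeThree + dilate 4 (thetaCoprimeThree : R⟦X⟧) := by
  rw [oddThetaCoprimeThree, thetaCoprimeThree, dilate_squareSeries (m := 2) rfl, ← map_add]
  congr 1
  ext k
  rcases k.even_or_odd' with ⟨j, rfl | rfl⟩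
  · simp [show 3 ∣ 2 * j ↔ 3 ∣ j by omega]
  · simp

theorem altThetaCoprimeThree_eq_sub :
    altThetaCoprimeThree = oddThetaCoprimeThree - dilate 4 (thetaCoprimeThree : R⟦X⟧) := by
  rw [oddThetaCoprimeThree, thetaCoprimeThree, altThetaCoprimeThree,
    dilate_squareSeries (m := 2) rfl, ← map_sub]
  congr 1
  ext k
  rcases k.even_or_odd' with ⟨j, rfl | rfl⟩
  · by_cases hj : 3 ∣ j <;>
      simp [show 3 ∣ 2 * j ↔ 3 ∣ j by omega, hj, Nat.not_odd_iff_even.2 (even_two_mul j)]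
  · simp [pow_succ]

theorem evalNegHom_oddThetaCoprimeThree :
    evalNegHom oddThetaCoprimeThree = -(oddThetaCoprimeThree : R⟦X⟧) :=
  evalNegHom_squareSeries_of_odd fun _ hk ↦ if_neg fun h ↦ Nat.not_odd_iff_even.2 hk h.1

theorem oddThetaCoprimeThree_mul_dilate_nine [NoZeroDivisors R] (h2 : (2 : R) ≠ 0) :
    oddThetaCoprimeThree * dilate 9 oddTheta =
      (dilate 8 thetaCoprimeThree * dilate 2 oddThetaCoprimeThree : R⟦X⟧) := by
  have hsq := oddTheta_sq h2
  rw [theta_eq_dilate_nine_add, oddTheta_eq_dilate_nine_add, two_mul] at hsq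
  simp only [map_add] at hsq
  have hv : dilate 8 thetaCoprimeThree ∈ supportedMod (2 : ZMod 3) :=
    dilate_mem_supportedMod (R := R) thetaCoprimeThree_mem rfl
  have ho : dilate 2 oddThetaCoprimeThree ∈ supportedMod (2 : ZMod 3) :=
    dilate_mem_supportedMod (R := R) oddThetaCoprimeThree_mem rfl
  have hclass (f : R⟦X⟧) : dilate 9 f ∈ supportedMod (0 : ZMod 3) :=
    dilate_mem_supportedMod_zero (by decide) f
  have hpart := congrArg (residuePart (1 : ZMod 3)) hsq
  rw [residuePart_one_add_sq (hclass _) oddThetaCoprimeThree_mem, residuePart_one_add_mul_add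
    (dilate_mem_supportedMod (hclass _) (mul_zero _)) (add_mem hv hv)
    (dilate_mem_supportedMod (hclass _) (mul_zero _)) ho] at hpart
  refine mul_left_cancel₀ (powerSeries_two_ne_zero h2) ?_
  linear_combination hpart

end ThreeDissection

section ModThree

theorem dilate_eq_pow (p : ℕ) [Fact p.Prime] [NeZero p] (f : (ZMod p)⟦X⟧) : dilate p f = f ^ p := by
  rw [← MvPowerSeries.map_frobenius_expand (R := ZMod p) p (NeZero.ne p) (f := f),
    ZMod.frobenius_zmod]
  exact (congrFun (map_id (R := ZMod p)) (dilate p f)).symm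

theorem dilate_nine_eq_pow (f : (ZMod 3)⟦X⟧) : dilate 9 f = f ^ 9 := by
  rw [← dilate_dilate (show 3 * 3 = 9 from rfl), dilate_eq_pow, dilate_eq_pow, ← pow_mul]

theorem eq_C_of_dilate_eq {R : Type*} [CommRing R] {k : ℕ} [NeZero k] (hk : 2 ≤ k) {f : R⟦X⟧}
    (hf : dilate k f = f) : f = C (constantCoeff f) := by
  ext n
  induction n using Nat.strong_induction_on with
  | _ n ih =>
    rcases n.eq_zero_or_pos with rfl | hn
    · simp
    · rw [coeff_C, if_neg hn.ne', ← hf, coeff_expand]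
      split_ifs with h
      · rw [ih _ (Nat.div_lt_self hn hk), coeff_C, if_neg]
        exact (Nat.div_pos (Nat.le_of_dvd hn h) (by omega)).ne'
      · rfl

theorem constantCoeff_theta {R : Type*} [CommRing R] : constantCoeff (theta : R⟦X⟧) = 1 := by
  rw [← coeff_zero_eq_constantCoeff_apply, theta, coeff_squareSeries]
  simp

theorem constantCoeff_altTheta {R : Type*} [CommRing R] :
    constantCoeff (altTheta : R⟦X⟧) = 1 := by
  rw [← coeff_zero_eq_constantCoeff_apply, altTheta, coeff_squareSeries]
  simp

theorem three_eq_zero_zmod_three : (3 : (ZMod 3)⟦X⟧) = 0 := by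
  rw [← map_ofNat (C : ZMod 3 →+* (ZMod 3)⟦X⟧), show (OfNat.ofNat 3 : ZMod 3) = 0 from rfl,
    map_zero]

theorem dilate_two_altTheta_pow_four :
    (dilate 2 altTheta ^ 4 : (ZMod 3)⟦X⟧) = altTheta ^ 2 * theta ^ 2 := by
  rw [← mul_pow, altTheta_mul_theta (by decide), ← pow_mul]

theorem altTheta_pow_four_add_theta_pow_four :
    (altTheta ^ 4 + theta ^ 4 : (ZMod 3)⟦X⟧) = 2 := by
  have hinv : dilate 2 (altTheta ^ 4 + theta ^ 4 : (ZMod 3)⟦X⟧) = altTheta ^ 4 + theta ^ 4 := by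
    rw [map_add, map_pow, map_pow]
    have hsum := altTheta_sq_add_theta_sq (R := ZMod 3)
    have hmul := altTheta_mul_theta (R := ZMod 3) (by decide)
    linear_combination (-(altTheta ^ 2 + theta ^ 2) - 2 * dilate 2 theta ^ 2) * hsum +
      2 * (altTheta * theta + dilate 2 altTheta ^ 2) * hmul +
      (dilate 2 altTheta ^ 4 - dilate 2 theta ^ 4) * three_eq_zero_zmod_three
  rw [eq_C_of_dilate_eq le_rfl hinv, map_add, map_pow, map_pow, constantCoeff_altTheta,
    constantCoeff_theta, one_pow, one_add_one_eq_two, map_ofNat]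

theorem isUnit_altTheta {R : Type*} [CommRing R] : IsUnit (altTheta : R⟦X⟧) :=
  isUnit_iff_constantCoeff.2 ((constantCoeff_altTheta (R := R)).symm ▸ isUnit_one)

theorem rbarSeries_four_nine_mul :
    (rbarSeries 4 9 * dilate 36 altTheta : (ZMod 3)⟦X⟧) = dilate 4 altTheta * altTheta ^ 8 := by
  refine isUnit_altTheta.mul_left_cancel ?_
  have h := rbarSeries_mul_altTheta (R := ZMod 3) (show Nat.lcm 4 9 = 36 from rfl)
  rw [dilate_nine_eq_pow altTheta] at h
  linear_combination h

theorem dilate_four_altTheta_mul_pow_eight_add_evalNegHom :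
    dilate 4 altTheta * altTheta ^ 8 + evalNegHom (dilate 4 altTheta * altTheta ^ 8) =
      dilate 2 (dilate 2 altTheta + dilate 2 altTheta * altTheta ^ 8 : (ZMod 3)⟦X⟧) := by
  have hneg : evalNegHom (altTheta : (ZMod 3)⟦X⟧) = theta := by
    rw [← evalNegHom_theta, evalNegHom_evalNegHom]
  have hfourth := altTheta_pow_four_add_theta_pow_four
  have hu := dilate_two_altTheta_pow_four
  rw [map_mul, evalNegHom_dilate_of_even (by decide), map_pow, hneg, map_add, map_mul, map_pow,
    dilate_dilate (show 2 * 2 = 4 from rfl)]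
  linear_combination
    dilate 4 altTheta * (altTheta ^ 4 + theta ^ 4 + 2) * hfourth
      + 2 * dilate 4 altTheta * (dilate 2 altTheta ^ 4 + altTheta ^ 2 * theta ^ 2) * hu
      + dilate 4 altTheta * (1 - dilate 2 altTheta ^ 8) * three_eq_zero_zmod_three

theorem residuePart_zero_dilate_two_altTheta_mul_sq :
    residuePart (0 : ZMod 3) (dilate 2 altTheta * altTheta ^ 2 : (ZMod 3)⟦X⟧) =
      dilate 2 altTheta ^ 9 * altTheta ^ 6 := by
  have hdiss : (altTheta : (ZMod 3)⟦X⟧) = altTheta ^ 9 + altThetaCoprimeThree := by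
    conv_lhs => rw [altTheta_eq_dilate_nine_sub, dilate_nine_eq_pow]
    linear_combination -altThetaCoprimeThree * three_eq_zero_zmod_three
  have hdiss₂ : (dilate 2 altTheta : (ZMod 3)⟦X⟧) =
      dilate 2 altTheta ^ 9 + dilate 2 altThetaCoprimeThree := by
    rw [← map_pow, ← map_add, ← hdiss]
  have hclass (f : (ZMod 3)⟦X⟧) : f ^ 9 ∈ supportedMod (0 : ZMod 3) :=
    dilate_nine_eq_pow f ▸ dilate_mem_supportedMod_zero (by decide) f
  have hu8 : (dilate 2 altTheta ^ 8 : (ZMod 3)⟦X⟧) = altTheta ^ 4 * (2 - altTheta ^ 4) := by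
    linear_combination (dilate 2 altTheta ^ 4 + altTheta ^ 2 * theta ^ 2)
      * dilate_two_altTheta_pow_four + altTheta ^ 4 * altTheta_pow_four_add_theta_pow_four
  have key : (altTheta ^ 4 * (dilate 2 altTheta ^ 8 * altTheta ^ 8
      + 2 * (1 - altTheta ^ 8) * (1 - dilate 2 altTheta ^ 8)) : (ZMod 3)⟦X⟧) =
      dilate 2 altTheta ^ 8 := by
    rw [hu8]
    linear_combination (altTheta ^ 16 * (2 - altTheta ^ 4) - altTheta ^ 8)
      * three_eq_zero_zmod_three
  have hpart := residuePart_zero_add_mul_add_sq (hclass (dilate 2 altTheta))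
    (dilate_mem_supportedMod (k := 2) altThetaCoprimeThree_mem rfl) (hclass altTheta)
    altThetaCoprimeThree_mem
  rw [← hdiss, ← hdiss₂] at hpart
  rw [hpart, eq_sub_of_add_eq' hdiss₂.symm, eq_sub_of_add_eq' hdiss.symm]
  linear_combination altTheta ^ 6 * dilate 2 altTheta * key

theorem residuePart_zero_dilate_two_altTheta_mul_pow_eight :
    residuePart (0 : ZMod 3) (dilate 2 altTheta * altTheta ^ 8 : (ZMod 3)⟦X⟧) =
      dilate 3 altTheta * dilate 9 (dilate 2 altTheta * altTheta) := by
  have hsplit : (dilate 2 altTheta * altTheta ^ 8 : (ZMod 3)⟦X⟧) =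
      dilate 2 altTheta * altTheta ^ 2 * dilate 3 (altTheta ^ 2) := by
    rw [dilate_eq_pow]
    ring
  rw [hsplit, residuePart_mul_of_mem_zero _ _ (dilate_mem_supportedMod_zero dvd_rfl _),
    residuePart_zero_dilate_two_altTheta_mul_sq, dilate_eq_pow, dilate_eq_pow, dilate_nine_eq_pow]
  ring

theorem coeff_dilate_two_altTheta_mul_pow_eight (n : ℕ) :
    coeff (9 * n + 6) (dilate 2 altTheta * altTheta ^ 8 : (ZMod 3)⟦X⟧) = 0 := by
  have hthree : ((9 * n + 6 : ℕ) : ZMod 3) = 0 := (ZMod.natCast_eq_zero_iff _ 3).2 (by omega)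
  have hnine : ((9 * n + 6 : ℕ) : ZMod 9) = 6 := by
    push_cast
    reduce_mod_char
  rw [← coeff_residuePart_of_eq hthree, residuePart_zero_dilate_two_altTheta_mul_pow_eight,
    ← coeff_residuePart_of_eq hnine,
    residuePart_mul_of_mem_zero _ _ (dilate_mem_supportedMod_zero dvd_rfl _), altTheta,
    residuePart_dilate_squareSeries (by decide), zero_mul, map_zero]

theorem coeff_dilate_two_altTheta (n : ℕ) :
    coeff (9 * n + 6) (dilate 2 altTheta : (ZMod 3)⟦X⟧) = 0 := by
  have hnine : ((9 * n + 6 : ℕ) : ZMod 9) = 6 := by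
    push_cast
    reduce_mod_char
  rw [← coeff_residuePart_of_eq hnine, altTheta, residuePart_dilate_squareSeries (by decide),
    map_zero]

theorem coeff_dilate_four_altTheta_mul_pow_eight (n : ℕ) :
    coeff (18 * n + 12) (dilate 4 altTheta * altTheta ^ 8 : (ZMod 3)⟦X⟧) = 0 := by
  have h := congrArg (coeff (18 * n + 12)) dilate_four_altTheta_mul_pow_eight_add_evalNegHom
  rw [map_add, coeff_evalNegHom, Even.neg_one_pow (by grind), one_mul,
    show 18 * n + 12 = 2 * (9 * n + 6) by ring, coeff_expand_mul, map_add,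
    coeff_dilate_two_altTheta, coeff_dilate_two_altTheta_mul_pow_eight, zero_add, ← two_mul] at h
  rw [show 18 * n + 12 = 2 * (9 * n + 6) by ring]
  exact (mul_eq_zero.1 h).resolve_left (by decide)

theorem three_dvd_Rbar_four_nine (n : ℕ) : 3 ∣ Rbar 4 9 (18 * n + 12) := by
  have hclass : ((18 * n + 12 : ℕ) : ZMod 18) = 12 := by
    push_cast
    reduce_mod_char
  have hpart : residuePart (12 : ZMod 18) (dilate 4 altTheta * altTheta ^ 8 : (ZMod 3)⟦X⟧) = 0 := by
    ext m
    rw [coeff_residuePart, map_zero, ite_eq_right_iff]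
    intro hm
    have hmod : m % 18 = 12 := (ZMod.natCast_eq_natCast_iff' m 12 18).1 hm
    rw [← Nat.div_add_mod m 18, hmod, coeff_dilate_four_altTheta_mul_pow_eight]
  rw [← rbarSeries_four_nine_mul,
    residuePart_mul_of_mem_zero _ _ (dilate_mem_supportedMod_zero (by decide) _)] at hpart
  have h := (isUnit_altTheta.map (dilate 36)).mul_left_eq_zero.1 hpart
  rw [← ZMod.natCast_eq_zero_iff]
  have h' := congrArg (coeff (18 * n + 12)) h
  rwa [coeff_residuePart_of_eq hclass, map_zero, rbarSeries, coeff_mk] at h'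

end ModThree

section ModThirtyTwo

variable {R : Type*} [CommRing R]

theorem C_dvd_iff_dvd_coeff {r : R} {f : R⟦X⟧} : C r ∣ f ↔ ∀ n, r ∣ coeff n f := by
  constructor
  · rintro ⟨g, rfl⟩ n
    exact ⟨coeff n g, coeff_C_mul n g r⟩
  · intro h
    choose a ha using h
    refine ⟨.mk a, ?_⟩
    ext n
    rw [coeff_C_mul, coeff_mk, ha]

theorem natCast_dvd_dilate_sub_pow (p : ℕ) [Fact p.Prime] [NeZero p] (f : ℤ⟦X⟧) :
    (p : ℤ⟦X⟧) ∣ dilate p f - f ^ p := by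
  rw [← map_natCast (C : ℤ →+* ℤ⟦X⟧), C_dvd_iff_dvd_coeff]
  intro n
  rw [← ZMod.intCast_zmod_eq_zero_iff_dvd, ← eq_intCast (Int.castRingHom (ZMod p)), ← coeff_map,
    map_sub, map_expand, map_pow, dilate_eq_pow, sub_self, map_zero]

theorem two_dvd_dilate_two_sub_sq (f : ℤ⟦X⟧) : 2 ∣ dilate 2 f - f ^ 2 :=
  natCast_dvd_dilate_sub_pow 2 f

theorem two_dvd_dilate_four_sub_pow_four (f : ℤ⟦X⟧) : 2 ∣ dilate 4 f - f ^ 4 := by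
  obtain ⟨a, ha⟩ := two_dvd_dilate_two_sub_sq f
  obtain ⟨b, hb⟩ := two_dvd_dilate_two_sub_sq (dilate 2 f)
  rw [dilate_dilate (show 2 * 2 = 4 from rfl)] at hb
  exact ⟨b + 2 * a * f ^ 2 + 2 * a ^ 2, by
    linear_combination hb + (dilate 2 f + f ^ 2 + 2 * a) * ha⟩

theorem two_dvd_altTheta_sub_one : (2 : R⟦X⟧) ∣ altTheta - 1 := by
  refine ⟨squareSeries fun k ↦ if k = 0 then 0 else (-1) ^ k, ?_⟩
  have hone : (1 : R⟦X⟧) = squareSeries fun k ↦ if k = 0 then 1 else 0 := by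
    refine eq_squareSeries (fun k ↦ ?_) fun n hn ↦ ?_
    · rw [coeff_one]
      exact if_congr mul_self_eq_zero rfl rfl
    · rw [coeff_one, if_neg (by rintro rfl; exact hn .zero)]
  rw [altTheta, hone, ← map_sub, two_mul, ← map_add]
  congr 1
  ext k
  by_cases hk : k = 0 <;> simp [hk, two_mul]

theorem four_dvd_altTheta_sq_sub_one : (4 : R⟦X⟧) ∣ altTheta ^ 2 - 1 := by
  obtain ⟨a, ha⟩ := two_dvd_altTheta_sub_one (R := R)
  exact ⟨a + a ^ 2, by linear_combination (altTheta + 1 + 2 * a) * ha⟩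

theorem two_dvd_sq_mul_dilate_four_add (f g : ℤ⟦X⟧) :
    2 ∣ f ^ 2 * dilate 4 g + g ^ 2 * dilate 4 f + dilate 2 f * dilate 2 g * (g ^ 2 + f ^ 2) := by
  obtain ⟨a, ha⟩ := two_dvd_dilate_two_sub_sq f
  obtain ⟨b, hb⟩ := two_dvd_dilate_two_sub_sq g
  obtain ⟨c, hc⟩ := two_dvd_dilate_four_sub_pow_four f
  obtain ⟨d, hd⟩ := two_dvd_dilate_four_sub_pow_four g
  refine ⟨f ^ 2 * g ^ 4 + g ^ 2 * f ^ 4 + f ^ 2 * d + g ^ 2 * c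
    + (a * dilate 2 g + f ^ 2 * b) * (g ^ 2 + f ^ 2), ?_⟩
  linear_combination f ^ 2 * hd + g ^ 2 * hc + (g ^ 2 + f ^ 2) * (dilate 2 g * ha + f ^ 2 * hb)

/-- The coefficient of `8` in the terms of `rbarSeries 4 9` with exponent divisible by `3`, which
modulo `32` are those of `1 + 8 * trisectionDefect`. -/
noncomputable def trisectionDefect : R⟦X⟧ :=
  altThetaCoprimeThree ^ 2 * (altThetaCoprimeThree * dilate 9 altTheta
    - dilate 4 altThetaCoprimeThree * dilate 36 altTheta)

theorem evalNegHom_altThetaCoprimeThree :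
    evalNegHom altThetaCoprimeThree =
      -(oddThetaCoprimeThree + dilate 4 thetaCoprimeThree : R⟦X⟧) := by
  rw [altThetaCoprimeThree_eq_sub, map_sub, evalNegHom_oddThetaCoprimeThree,
    evalNegHom_dilate_of_even (by decide)]
  ring

theorem dilate_nine_altTheta :
    dilate 9 altTheta = (dilate 36 theta - 2 * dilate 9 oddTheta : R⟦X⟧) := by
  conv_lhs => rw [altTheta_eq_dilate_four_sub, map_sub, map_mul, map_ofNat,
    dilate_dilate (show 9 * 4 = 36 from rfl)]

theorem evalNegHom_trisectionDefect :
    evalNegHom trisectionDefect =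
      (oddThetaCoprimeThree + dilate 4 thetaCoprimeThree) ^ 2 *
        (-((oddThetaCoprimeThree + dilate 4 thetaCoprimeThree)
            * (dilate 36 theta + 2 * dilate 9 oddTheta))
          - dilate 4 altThetaCoprimeThree * dilate 36 altTheta : R⟦X⟧) := by
  simp only [trisectionDefect, map_mul, map_sub, map_pow, dilate_nine_altTheta, map_ofNat,
    evalNegHom_altThetaCoprimeThree, evalNegHom_dilate_of_even (show Even 36 by decide),
    evalNegHom_dilate_of_even (show Even 4 by decide),
    evalNegHom_dilate_of_odd (show Odd 9 by decide), evalNegHom_oddTheta, map_neg]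
  ring

theorem eight_dvd_trisectionDefect_add_evalNegHom :
    8 ∣ trisectionDefect + evalNegHom (trisectionDefect : ℤ⟦X⟧) := by
  obtain ⟨f, hf⟩ :=
    two_dvd_sq_mul_dilate_four_add (dilate 4 thetaCoprimeThree) oddThetaCoprimeThree
  rw [dilate_dilate (show 2 * 4 = 8 from rfl),
    ← oddThetaCoprimeThree_mul_dilate_nine two_ne_zero] at hf
  obtain ⟨s, hs⟩ := map_dvd (dilate 36) (two_dvd_altTheta_sub_one (R := ℤ))
  have hv := congrArg (dilate 4) (thetaCoprimeThree_eq_add (R := ℤ))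
  have hB := congrArg (dilate 36) (altTheta_eq_dilate_four_sub (R := ℤ))
  have hy := congrArg (dilate 36) (theta_eq_dilate_four_add (R := ℤ))
  simp only [map_sub, map_add, map_mul, map_one, map_ofNat] at hs hv hB hy
  have hx : dilate 36 altTheta = 1 + 2 * s := by linear_combination hs
  have hyx : dilate 36 theta = 1 + 2 * s + 4 * dilate 36 oddTheta := by
    linear_combination hy - hB + hx
  rw [evalNegHom_trisectionDefect, trisectionDefect, dilate_nine_altTheta,
    altThetaCoprimeThree_eq_sub (R := ℤ), map_sub, hx, hyx]
  generalize dilate 36 (oddTheta : ℤ⟦X⟧) = b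
  generalize dilate 9 (oddTheta : ℤ⟦X⟧) = O at hf ⊢
  generalize dilate 4 (dilate 4 (thetaCoprimeThree : ℤ⟦X⟧)) = e₄ at hf hv ⊢
  generalize dilate 4 (thetaCoprimeThree : ℤ⟦X⟧) = e at hf hv ⊢
  generalize dilate 4 (oddThetaCoprimeThree : ℤ⟦X⟧) = o₄ at hf hv ⊢
  generalize (oddThetaCoprimeThree : ℤ⟦X⟧) = o at hf ⊢
  refine ⟨-(1 + 2 * s + 4 * b) * o ^ 2 * o₄ - (s + 2 * b) * (e ^ 2 * o₄ + o ^ 2 * e₄)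
    + b * (o₄ - e₄) * (o ^ 2 + e ^ 2) - o * e ^ 2 * O - f, ?_⟩
  linear_combination -2 * (3 * o ^ 2 + e ^ 2) * (1 + 2 * s + 4 * b) * hv - 4 * hf

/-- Multiplying by `A ^ 2 + 2 * A * w + 4 * w ^ 2` turns the factor `altTheta = A - 2 * w` of
`rbarSeries_mul_altTheta` into `A ^ 3 - 8 * w ^ 3`, all of whose exponents are multiples of `3`. -/
theorem residuePart_zero_rbarSeries_mul :
    residuePart (0 : ZMod 3) (rbarSeries 4 9) *
        ((dilate 9 altTheta ^ 3 - 8 * altThetaCoprimeThree ^ 3) * dilate 36 altTheta) =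
      (dilate 9 altTheta ^ 3 * dilate 36 altTheta
        - 8 * (altThetaCoprimeThree ^ 2 * dilate 4 altThetaCoprimeThree * dilate 9 altTheta)
          : R⟦X⟧) := by
  have hA : dilate 9 (altTheta : R⟦X⟧) ∈ supportedMod (0 : ZMod 3) :=
    dilate_mem_supportedMod_zero (by decide) _
  have hB : dilate 36 (altTheta : R⟦X⟧) ∈ supportedMod (0 : ZMod 3) :=
    dilate_mem_supportedMod_zero (by decide) _
  have hw : (altThetaCoprimeThree : R⟦X⟧) ∈ supportedMod (1 : ZMod 3) := altThetaCoprimeThree_mem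
  have hw' : dilate 4 (altThetaCoprimeThree : R⟦X⟧) ∈ supportedMod (1 : ZMod 3) :=
    dilate_mem_supportedMod hw rfl
  have hcube : (dilate 9 altTheta ^ 3 - 8 * altThetaCoprimeThree ^ 3) * dilate 36 altTheta ∈
      supportedMod (R := R) (0 : ZMod 3) := by
    have h8 : (8 : R⟦X⟧) ∈ supportedMod (0 : ZMod 3) := SetLike.natCast_mem_graded _ 8
    have hwww : altThetaCoprimeThree ^ 3 ∈ supportedMod (R := R) (0 : ZMod 3) :=
      SetLike.pow_mem_graded 3 hw
    have hAAA : dilate 9 altTheta ^ 3 ∈ supportedMod (R := R) (0 : ZMod 3) :=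
      SetLike.pow_mem_graded 3 hA
    exact mul_mem_supportedMod (sub_mem hAAA (mul_mem_supportedMod h8 hwww (add_zero 0))) hB
      (add_zero 0)
  rw [← residuePart_mul_of_mem_zero _ _ hcube, ← residuePart_zero_mul_sub hA hB hw hw']
  congr 1
  have hG := rbarSeries_mul_altTheta (R := R) (show Nat.lcm 4 9 = 36 from rfl)
  have hx := altTheta_eq_dilate_nine_sub (R := R)
  have hz := congrArg (dilate 4) hx
  rw [map_sub, map_mul, map_ofNat, dilate_dilate (show 4 * 9 = 36 from rfl)] at hz
  linear_combination
    (dilate 9 altTheta ^ 2 + 2 * dilate 9 altTheta * altThetaCoprimeThree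
      + 4 * altThetaCoprimeThree ^ 2) * (hG + dilate 9 altTheta * hz
        - rbarSeries 4 9 * dilate 36 altTheta * hx)

theorem thirtyTwo_dvd_sub_of_mul_eq {d y m : R}
    (h : d * (1 + 4 * y) = 8 * m) : 32 ∣ d - 8 * m :=
  ⟨4 * y ^ 2 * m - 2 * y ^ 3 * d - y * m, by linear_combination (1 - 4 * y + 16 * y ^ 2) * h⟩

theorem thirtyTwo_dvd_residuePart_zero_rbarSeries_sub :
    32 ∣ residuePart (0 : ZMod 3) (rbarSeries 4 9) - 1 - 8 * (trisectionDefect : R⟦X⟧) := by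
  obtain ⟨a, ha⟩ := map_dvd (dilate 9) (four_dvd_altTheta_sq_sub_one (R := R))
  obtain ⟨b, hb⟩ := map_dvd (dilate 36) (four_dvd_altTheta_sq_sub_one (R := R))
  have h := residuePart_zero_rbarSeries_mul (R := R)
  rw [trisectionDefect]
  simp only [map_sub, map_pow, map_one, map_ofNat] at ha hb
  generalize residuePart (0 : ZMod 3) (rbarSeries 4 9 : R⟦X⟧) = g at h ⊢
  generalize dilate 9 (altTheta : R⟦X⟧) = A at ha h ⊢
  generalize dilate 36 (altTheta : R⟦X⟧) = B at hb h ⊢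
  generalize dilate 4 (altThetaCoprimeThree : R⟦X⟧) = w' at h ⊢
  generalize (altThetaCoprimeThree : R⟦X⟧) = w at h ⊢
  have hunit : (g - 1) *
      (1 + 4 * (2 * a + 4 * a ^ 2 + b * (1 + 4 * a) ^ 2 - 2 * w ^ 3 * A * B ^ 2)) =
      8 * (w ^ 2 * (w * A * B ^ 2 - w' * A ^ 2 * B)) := by
    linear_combination A * B * h
      - (g - 1) * ((A ^ 2 * B ^ 2 + (1 + 4 * a) * B ^ 2) * ha + (1 + 4 * a) ^ 2 * hb)
  have hdefect : w ^ 2 * (w * A * B ^ 2 - w' * A ^ 2 * B) =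
      w ^ 2 * (w * A - w' * B) + 4 * (w ^ 2 * (w * A * b - w' * B * a)) := by
    linear_combination w ^ 3 * A * hb - w ^ 2 * w' * B * ha
  obtain ⟨c, hc⟩ := thirtyTwo_dvd_sub_of_mul_eq hunit
  exact ⟨c + w ^ 2 * (w * A * b - w' * B * a), by linear_combination hc + 8 * hdefect⟩

theorem thirtyTwo_dvd_Rbar_four_nine (n : ℕ) : 32 ∣ Rbar 4 9 (18 * n + 12) := by
  have hclass : ((18 * n + 12 : ℕ) : ZMod 3) = 0 := (ZMod.natCast_eq_zero_iff _ 3).2 (by omega)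
  have hK := eight_dvd_trisectionDefect_add_evalNegHom
  have hG := thirtyTwo_dvd_residuePart_zero_rbarSeries_sub (R := ℤ)
  rw [← map_ofNat (C : ℤ →+* ℤ⟦X⟧), C_dvd_iff_dvd_coeff] at hK hG
  specialize hK (18 * n + 12)
  specialize hG (18 * n + 12)
  rw [map_add, coeff_evalNegHom, Even.neg_one_pow (by grind), one_mul] at hK
  rw [map_sub, map_sub, coeff_residuePart_of_eq hclass, coeff_one, if_neg (by omega), sub_zero,
    ← map_ofNat (C : ℤ →+* ℤ⟦X⟧), coeff_C_mul, rbarSeries, coeff_mk] at hG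
  omega

end ModThirtyTwo

theorem Rbar_four_nine_18n_12_mod_96 (n : ℕ) :
    Rbar 4 9 (18 * n + 12) ≡ 0 [MOD 96] := by
  have hdvd : 3 * 32 ∣ Rbar 4 9 (18 * n + 12) :=
    Nat.Coprime.mul_dvd_of_dvd_of_dvd (by decide) (three_dvd_Rbar_four_nine n)
      (thirtyTwo_dvd_Rbar_four_nine n)
  exact Nat.modEq_zero_iff_dvd.2 hdvd
end
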